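/- (Theorem 3, scan test with unknown rank-1 edge probabilities is powerful.) Suppose Assumption 3 holds, r(n) = o(n), min over C ⊆ V_n with |C| = r and over all maximizers D*_C of λ_C·E_0[e(D*_C)] tends to +∞ as n → ∞, and for all sufficiently large n and every C ⊆ V_n with |C| = r, max over nonempty D ⊆ C of E_0[e(D)]·h(λ_C − 1)/(|D|·log(n/|D|)) ≥ 1 + ε, where ε > 0 is the constant used in the scan test. Then the unknown-probability scan test is asymptotically powerful: R_n(ψ^{u}_n) → 0 as n → ∞. -/

import Mathlib

/-!
The scan statistic compares the number `e(D)` of edges inside `D` with an estimate of its null mean,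
and Chernoff's bound says that `P₀(μ h(e(D)/μ - 1) ≥ s) ≤ exp(-s)` for `μ = E₀[e(D)]`
(`prob_scanG_ge`). As there are at most `(en/|D|)^|D|` sets of a given size, the critical value
`|D| log(n/|D|)` is what a union bound over all `D` requires (`sum_sets_le`). The work lies in
replacing `μ` by the estimator. With `d = ∑_{i ∈ D} θ_i` and `S = ∑_i θ_i`, rank-1 weights give
`E₀[e(V)] ≈ S²/2`, `E₀[e(D,-D)] = d (S - d)` and `E₀[e(D)] ≈ d²/2`, and the estimator solves these
equations for `d²/2`.

*Type I error.* Only an underestimate of `μ` is harmful. Outside an event of small probability the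
total count is within `K` standard deviations of its mean and every crossing count `e(D,-D)` is within
`2 √(|D| log(n/|D|))` standard deviations of its mean, and then `ê_τ(D) ≥ (1-c)² μ` with `c² μ`
small compared to `|D| log(n/|D|)` (`estCountTr_ge`). This comes from concentration when
`log(n/|D|)` is small compared to `n θ_min²`; otherwise the threshold `|D|² log⁴(n/|D|)/n` exceeds
`μ` by Assumption 3 (`threshold_ge`). Such an underestimate changes the scan statistic only slightly
(`scan_transfer`), so the union bound for the true means applies (`typeI`).

*Type II error.* Only a maximizer `D*` of `E₀[e(D)]/(|D| log(n/|D|))` over `D ⊆ C` matters. By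
Assumption 3 it has at least `r^{1/3}` vertices (`card_ge`), so it is scanned. With `q` small, typical
counts give `ê(D*) ≤ μ (1 + 28 q min(1, λ - 1))` (`est_upper`) and
`e(D*) ≥ μ (1 + (1 - 28 q)(λ - 1))` (`count_ge`, where the divergence of `λ E₀[e(D*)]` enters). Since
`h(c x) ≥ c² h(x)` for `c ≤ 1` (`hFun_mul_ge`), the scan condition then pushes the statistic above the
critical value (`scan_of_le`). If the threshold in `ê_τ` is active, the scan condition forces
`λ ≳ √(n/|D*|)` up to logarithms, and the statistic is again large (`scan_of_threshold`). These cases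
are combined in `scanStatU_ge` and `typeII`.

All assumptions are first turned into inequalities at a fixed `n` with explicit small constants
(`Good`, `eventually_good`); the constants are chosen in the final proof.
-/

open Finset Filter Asymptotics

namespace CommunityDetection

/-- Potential edges of a graph on `Fin n`: ordered pairs `i < j` of vertices. -/
abbrev Edge (n : ℕ) := {q : Fin n × Fin n // q.1 < q.2}

/-- A realization of the random graph: presence/absence of each potential edge. -/
abbrev Config (n : ℕ) := Edge n → Bool

/-- Probability of the event `E` when the edge indicators are independent Bernoulli
random variables with parameters `w`. -/
noncomputable def prob (n : ℕ) (w : Edge n → ℝ) (E : Set (Config n)) : ℝ :=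
  ∑ a : Config n, E.indicator (fun a => ∏ e : Edge n, (if a e then w e else 1 - w e)) a

/-- Null hypothesis edge parameters. -/
def nullW (n : ℕ) (p : Fin n → Fin n → ℝ) : Edge n → ℝ := fun e => p e.1.1 e.1.2

/-- Alternative hypothesis edge parameters: a community `C` with scaling `lam`. -/
def altW (n : ℕ) (p : Fin n → Fin n → ℝ) (lam : ℝ) (C : Finset (Fin n)) : Edge n → ℝ :=
  fun e => if e.1.1 ∈ C ∧ e.1.2 ∈ C then lam * p e.1.1 e.1.2 else p e.1.1 e.1.2

/-- The number of edges `e(D)` inside a vertex set `D`. -/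
def eCount (n : ℕ) (D : Finset (Fin n)) (a : Config n) : ℝ :=
  ∑ e : Edge n, if e.1.1 ∈ D ∧ e.1.2 ∈ D ∧ a e = true then 1 else 0

/-- The expected number of edges `E₀[e(D)]` inside `D` under the null hypothesis. -/
def expCount (n : ℕ) (p : Fin n → Fin n → ℝ) (D : Finset (Fin n)) : ℝ :=
  ∑ e : Edge n, if e.1.1 ∈ D ∧ e.1.2 ∈ D then p e.1.1 e.1.2 else 0

/-- The average edge probability `p̄_D` of `D`. -/
noncomputable def pbar (n : ℕ) (p : Fin n → Fin n → ℝ) (D : Finset (Fin n)) : ℝ :=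
  expCount n p D / (D.card.choose 2 : ℝ)

/-- The entropy function `h(x) = (x+1)log(x+1) - x`. -/
noncomputable def hFun (x : ℝ) : ℝ := (x + 1) * Real.log (x + 1) - x

/-- The worst-case risk of a test `ψ`: type-I error plus the worst type-II error over
all communities of size `r`. -/
noncomputable def risk (n r : ℕ) (p : Fin n → Fin n → ℝ) (lam : Finset (Fin n) → ℝ)
    (ψ : Config n → Bool) : ℝ :=
  prob n (nullW n p) {a | ψ a = true} +
    sSup {x | ∃ C : Finset (Fin n), C.card = r ∧
      x = prob n (altW n p (lam C) C) {a | ψ a = false}}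

/-- `max_{∅ ≠ D ⊆ C} E₀[e(D)] h(λ_C - 1) / (|D| log(n/|D|))`. -/
noncomputable def condSup (n : ℕ) (p : Fin n → Fin n → ℝ) (lamC : ℝ) (C : Finset (Fin n)) : ℝ :=
  sSup {x | ∃ D : Finset (Fin n), D ⊆ C ∧ D.Nonempty ∧
    x = expCount n p D * hFun (lamC - 1) / ((D.card : ℝ) * Real.log ((n : ℝ) / (D.card : ℝ)))}

/-- Assumption 1.1. -/
def Assumption11 (p : ∀ n, Fin n → Fin n → ℝ) (r : ℕ → ℕ) : Prop :=
  ∃ δ : ℝ, δ ∈ Set.Ioo (0 : ℝ) (1/2) ∧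
    ((fun n => (r n : ℝ)) =O[atTop] fun n => (n : ℝ) ^ ((1 : ℝ)/2 - δ)) ∧
    (∃ γ : ℕ → ℝ, (∀ n, 0 < γ n) ∧ Tendsto γ atTop (nhds 0) ∧
      ∀ n : ℕ, ∀ C : Finset (Fin n), C.card = r n → ∀ D : Finset (Fin n), D ⊆ C → D.Nonempty →
        (D.card : ℝ) < (r n : ℝ) / ((n : ℝ) / (r n : ℝ)) ^ (γ n) →
        (D.card : ℝ) * pbar n (p n) D / ((r n : ℝ) * pbar n (p n) C) ≤ δ) ∧
    ((fun n => sSup {x | ∃ C : Finset (Fin n), C.card = r n ∧ x = 1 / pbar n (p n) C})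
      =o[atTop] fun n => (r n : ℝ) / Real.log ((n : ℝ) / (r n : ℝ)))

/-- Assumption 1.2. -/
def Assumption12 (p : ∀ n, Fin n → Fin n → ℝ) (r : ℕ → ℕ) : Prop :=
  Tendsto (fun n => Real.log (r n : ℝ) / Real.log (n : ℝ)) atTop (nhds 0) ∧
  ((fun n => sSup {x | ∃ C : Finset (Fin n), C.card = r n ∧ x = Real.log (1 / pbar n (p n) C)})
    =o[atTop] fun n => Real.log ((n : ℝ) / (r n : ℝ)) / Real.log (r n : ℝ))

/-- Assumption 2. -/
def Assumption2 (p : ∀ n, Fin n → Fin n → ℝ) (r : ℕ → ℕ) (lam : ∀ n, Finset (Fin n) → ℝ) :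
    Prop :=
  Tendsto (fun n => sSup {x | ∃ C : Finset (Fin n), C.card = r n ∧
    ∃ i ∈ C, ∃ j ∈ C, i ≠ j ∧ x = (lam n C)^2 * p n i j}) atTop (nhds 0)

/-- The known-probability scan statistic `Ψ_D`. -/
noncomputable def scanStat (n : ℕ) (p : Fin n → Fin n → ℝ) (D : Finset (Fin n))
    (a : Config n) : ℝ :=
  if 0 < expCount n p D then
    expCount n p D * hFun (max (eCount n D a / expCount n p D - 1) 0) /
      ((D.card : ℝ) * Real.log ((n : ℝ) / (D.card : ℝ)))
  else 0

/-- The known-probability scan test. -/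
noncomputable def scanTest (n r : ℕ) (p : Fin n → Fin n → ℝ) (ε : ℝ) (a : Config n) : Bool :=
  if 1 + ε / 2 ≤
      sSup {x | ∃ D : Finset (Fin n), D.Nonempty ∧ D.card ≤ r ∧ x = scanStat n p D a}
  then true else false

/-- The objective defining the most informative subgraph `D*_C`. -/
noncomputable def objective (n : ℕ) (p : Fin n → Fin n → ℝ) (D : Finset (Fin n)) : ℝ :=
  expCount n p D / ((D.card : ℝ) * Real.log ((n : ℝ) / (D.card : ℝ)))

/-- The number of edges `e(D, -D)` between `D` and its complement. -/
def eCross (n : ℕ) (D : Finset (Fin n)) (a : Config n) : ℝ :=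
  ∑ e : Edge n,
    if ((e.1.1 ∈ D ∧ e.1.2 ∉ D) ∨ (e.1.1 ∉ D ∧ e.1.2 ∈ D)) ∧ a e = true then 1 else 0

/-- The estimator `ê(D)` of `E₀[e(D)]`. -/
noncomputable def estCount (n : ℕ) (D : Finset (Fin n)) (a : Config n) : ℝ :=
  (Real.sqrt (eCount n Finset.univ a) -
    Real.sqrt (eCount n Finset.univ a - 2 * eCross n D a))^2 / 4

/-- The thresholded estimator `ê_τ(D)`. -/
noncomputable def estCountTr (n : ℕ) (D : Finset (Fin n)) (a : Config n) : ℝ :=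
  max (estCount n D a) ((D.card : ℝ)^2 / (n : ℝ) * (Real.log ((n : ℝ) / (D.card : ℝ)))^4)

/-- The unknown-probability scan statistic `Ψᵘ_D`. -/
noncomputable def scanStatU (n : ℕ) (D : Finset (Fin n)) (a : Config n) : ℝ :=
  estCountTr n D a * hFun (max (eCount n D a / estCountTr n D a - 1) 0) /
    ((D.card : ℝ) * Real.log ((n : ℝ) / (D.card : ℝ)))

/-- The unknown-probability scan test. -/
noncomputable def scanTestU (n r : ℕ) (ε : ℝ) (a : Config n) : Bool :=
  if 1 + ε / 3 ≤
      sSup {x | ∃ D : Finset (Fin n),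
        (r : ℝ) ^ ((1 : ℝ)/3) ≤ (D.card : ℝ) ∧ D.card ≤ r ∧ x = scanStatU n D a}
  then true else false

/-- Assumption 3: maximal inhomogeneity of rank-1 weights. -/
def Assumption3 (θ : ∀ n, Fin n → ℝ) (r : ℕ → ℕ) : Prop :=
  (fun n => (sSup (Set.range (θ n)) / sInf (Set.range (θ n)))^2) =o[atTop]
    fun n => min ((r n : ℝ) ^ ((2 : ℝ)/3)) ((n : ℝ) / (r n : ℝ) * (sInf (Set.range (θ n)))^2)

/-! ### The entropy function -/

lemma hasDerivAt_hFun {x : ℝ} (hx : -1 < x) : HasDerivAt hFun (Real.log (x + 1)) x := by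
  have h0 : x + 1 ≠ 0 := by linarith
  have h1 : HasDerivAt (fun x : ℝ => x + 1) 1 x := (hasDerivAt_id x).add_const 1
  have h2 := (h1.mul (h1.log h0)).sub (hasDerivAt_id x)
  refine h2.congr_deriv ?_
  field_simp
  ring

lemma hFun_zero : hFun 0 = 0 := by simp [hFun]

lemma continuousOn_hFun : ContinuousOn hFun (Set.Ici 0) := fun x hx =>
  (hasDerivAt_hFun (by linarith [Set.mem_Ici.1 hx])).continuousAt.continuousWithinAt

lemma hFun_monotoneOn : MonotoneOn hFun (Set.Ici 0) := by
  refine monotoneOn_of_deriv_nonneg (convex_Ici 0) continuousOn_hFun ?_ ?_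
  · intro x hx
    rw [interior_Ici, Set.mem_Ioi] at hx
    exact (hasDerivAt_hFun (by linarith)).differentiableAt.differentiableWithinAt
  · intro x hx
    rw [interior_Ici, Set.mem_Ioi] at hx
    rw [(hasDerivAt_hFun (by linarith)).deriv]
    exact Real.log_nonneg (by linarith)

lemma hFun_mono {x y : ℝ} (hx : 0 ≤ x) (hxy : x ≤ y) : hFun x ≤ hFun y :=
  hFun_monotoneOn hx (hx.trans hxy) hxy

lemma hFun_nonneg {x : ℝ} (hx : 0 ≤ x) : 0 ≤ hFun x := by
  rw [← hFun_zero]; exact hFun_mono le_rfl hx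

/-- `h(x)/x²` is nonincreasing: rescaling the argument by `c ≤ 1` costs at most a factor `c²`.
This turns small relative errors in the mean and in the count into a factor close to `1`. -/
lemma hFun_mul_ge {c x : ℝ} (hc0 : 0 ≤ c) (hc1 : c ≤ 1) (hx : 0 ≤ x) :
    c ^ 2 * hFun x ≤ hFun (c * x) := by
  have hd : ∀ y : ℝ, 0 ≤ y → HasDerivAt (fun y => hFun (c * y) - c ^ 2 * hFun y)
      (Real.log (c * y + 1) * c - c ^ 2 * Real.log (y + 1)) y := by
    intro y hy
    have h1 : HasDerivAt (fun y : ℝ => c * y) c y := by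
      simpa using (hasDerivAt_id y).const_mul c
    have h2 : HasDerivAt (fun y => hFun (c * y)) (Real.log (c * y + 1) * c) y :=
      HasDerivAt.comp y (hasDerivAt_hFun (by nlinarith)) h1
    exact h2.sub ((hasDerivAt_hFun (by linarith)).const_mul _)
  have hm : MonotoneOn (fun y => hFun (c * y) - c ^ 2 * hFun y) (Set.Ici 0) := by
    refine monotoneOn_of_deriv_nonneg (convex_Ici 0)
      (fun y hy => (hd y hy).continuousAt.continuousWithinAt) ?_ ?_
    · intro y hy
      rw [interior_Ici, Set.mem_Ioi] at hy
      exact (hd y hy.le).differentiableAt.differentiableWithinAt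
    · intro y hy
      rw [interior_Ici, Set.mem_Ioi] at hy
      rw [(hd y hy.le).deriv]
      -- Bernoulli's inequality, in logarithmic form
      have hb : (1 + y) ^ c ≤ 1 + c * y :=
        rpow_one_add_le_one_add_mul_self (by linarith) hc0 hc1
      have h3 : c * Real.log (1 + y) ≤ Real.log (1 + c * y) := by
        rw [← Real.log_rpow (by linarith)]
        exact Real.log_le_log (Real.rpow_pos_of_pos (by linarith) _) hb
      rw [add_comm (c * y) 1, add_comm y 1]
      nlinarith
  have := hm (Set.mem_Ici.2 le_rfl) hx hx
  simp only [mul_zero, hFun_zero, sub_self] at this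
  linarith

lemma hFun_le_sq {x : ℝ} (hx : 0 ≤ x) : hFun x ≤ x ^ 2 / 2 := by
  have hd : ∀ y : ℝ, 0 ≤ y → HasDerivAt (fun y : ℝ => y ^ 2 / 2 - hFun y)
      (y - Real.log (y + 1)) y := by
    intro y hy
    have h1 : HasDerivAt (fun y : ℝ => y ^ 2 / 2) y y := by
      refine ((hasDerivAt_pow 2 y).div_const 2).congr_deriv ?_
      simp
    exact h1.sub (hasDerivAt_hFun (by linarith))
  have hm : MonotoneOn (fun y : ℝ => y ^ 2 / 2 - hFun y) (Set.Ici 0) := by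
    refine monotoneOn_of_deriv_nonneg (convex_Ici 0)
      (fun y hy => (hd y hy).continuousAt.continuousWithinAt) ?_ ?_
    · intro y hy
      rw [interior_Ici, Set.mem_Ioi] at hy
      exact (hd y hy.le).differentiableAt.differentiableWithinAt
    · intro y hy
      rw [interior_Ici, Set.mem_Ioi] at hy
      rw [(hd y hy.le).deriv]
      have := Real.log_le_sub_one_of_pos (show (0 : ℝ) < y + 1 by linarith)
      linarith
  have := hm (Set.mem_Ici.2 le_rfl) hx hx
  simp only [hFun_zero] at this
  norm_num at this
  linarith

/-- The unnormalised scan statistic `μ h((x/μ - 1)₊)` with observed count `x` and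
(estimated) mean `μ`. -/
noncomputable def scanG (x μ : ℝ) : ℝ := μ * hFun (max (x / μ - 1) 0)

lemma scanG_eq {x μ : ℝ} (hμ : 0 < μ) (hx : μ ≤ x) :
    scanG x μ = x * Real.log (x / μ) - x + μ := by
  have h1 : 1 ≤ x / μ := by rwa [le_div_iff₀ hμ, one_mul]
  rw [scanG, max_eq_left (by linarith), hFun]
  have : x / μ - 1 + 1 = x / μ := by ring
  rw [this]
  field_simp
  ring

lemma scanG_of_le {x μ : ℝ} (hμ : 0 < μ) (hx : x ≤ μ) : scanG x μ = 0 := by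
  have h1 : x / μ ≤ 1 := by rwa [div_le_one hμ]
  rw [scanG, max_eq_right (by linarith), hFun_zero, mul_zero]

lemma scanG_nonneg {x μ : ℝ} (hμ : 0 < μ) : 0 ≤ scanG x μ :=
  mul_nonneg hμ.le (hFun_nonneg (le_max_right _ _))

lemma scanG_anti {x μ μ' : ℝ} (hμ : 0 < μ) (h : μ ≤ μ') : scanG x μ' ≤ scanG x μ := by
  have hμ' := hμ.trans_le h
  rcases le_total x μ' with hx | hx
  · rw [scanG_of_le hμ' hx]; exact scanG_nonneg hμ
  · rw [scanG_eq hμ' hx, scanG_eq hμ (h.trans hx)]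
    have hx0 : 0 < x := hμ'.trans_le hx
    have e1 : Real.log (x / μ) = Real.log (x / μ') + Real.log (μ' / μ) := by
      rw [← Real.log_mul (by positivity) (by positivity)]
      congr 1; field_simp
    have e2 : 1 - μ / μ' ≤ Real.log (μ' / μ) := by
      have := Real.one_sub_inv_le_log_of_pos (show 0 < μ' / μ by positivity)
      rwa [inv_div] at this
    have e3 : μ' - μ ≤ x * Real.log (μ' / μ) := by
      have h3 : 0 ≤ 1 - μ / μ' := by
        rw [sub_nonneg, div_le_one hμ']; exact h
      calc μ' - μ = μ' * (1 - μ / μ') := by field_simp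
        _ ≤ x * (1 - μ / μ') := mul_le_mul_of_nonneg_right hx h3
        _ ≤ _ := mul_le_mul_of_nonneg_left e2 hx0.le
    rw [e1]; linarith

lemma scanG_mono_left {x x' μ : ℝ} (hμ : 0 < μ) (h : x ≤ x') : scanG x μ ≤ scanG x' μ := by
  refine mul_le_mul_of_nonneg_left (hFun_mono (le_max_right _ _) ?_) hμ.le
  exact max_le_max (by gcongr) le_rfl

/-! ### Chernoff bounds for edge counts -/

/-- The probability of a single configuration. -/
noncomputable def wt (n : ℕ) (w : Edge n → ℝ) (a : Config n) : ℝ :=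
  ∏ e : Edge n, (if a e then w e else 1 - w e)

lemma wt_nonneg {n : ℕ} {w : Edge n → ℝ} (hw : ∀ e, 0 ≤ w e ∧ w e ≤ 1) (a : Config n) :
    0 ≤ wt n w a := by
  refine Finset.prod_nonneg fun e _ => ?_
  split_ifs
  · exact (hw e).1
  · linarith [(hw e).2]

lemma prob_nonneg {n : ℕ} {w : Edge n → ℝ} (hw : ∀ e, 0 ≤ w e ∧ w e ≤ 1)
    (E : Set (Config n)) : 0 ≤ prob n w E :=
  Finset.sum_nonneg fun a _ => Set.indicator_nonneg (fun a _ => wt_nonneg hw a) a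

lemma prob_mono {n : ℕ} {w : Edge n → ℝ} (hw : ∀ e, 0 ≤ w e ∧ w e ≤ 1)
    {E F : Set (Config n)} (h : E ⊆ F) : prob n w E ≤ prob n w F :=
  Finset.sum_le_sum fun a _ =>
    Set.indicator_le_indicator_of_subset h (fun a => wt_nonneg hw a) a

lemma prob_union {n : ℕ} {w : Edge n → ℝ} (hw : ∀ e, 0 ≤ w e ∧ w e ≤ 1)
    (E F : Set (Config n)) : prob n w (E ∪ F) ≤ prob n w E + prob n w F := by
  unfold prob
  rw [← Finset.sum_add_distrib]
  refine Finset.sum_le_sum fun a _ => ?_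
  have h0 := wt_nonneg hw a
  unfold wt at h0
  by_cases h1 : a ∈ E <;> by_cases h2 : a ∈ F <;> (simp [Set.indicator, h1, h2]; try exact h0)

lemma prob_biUnion {n : ℕ} {w : Edge n → ℝ} (hw : ∀ e, 0 ≤ w e ∧ w e ≤ 1)
    {ι : Type*} (I : Finset ι) (E : ι → Set (Config n)) :
    prob n w {a | ∃ i ∈ I, a ∈ E i} ≤ ∑ i ∈ I, prob n w (E i) := by
  classical
  induction I using Finset.induction_on with
  | empty => simp [prob]
  | insert i I hi ih =>
    rw [Finset.sum_insert hi]
    refine le_trans (prob_mono hw (F := E i ∪ {a | ∃ j ∈ I, a ∈ E j}) ?_)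
      ((prob_union hw _ _).trans (by linarith))
    rintro a ⟨j, hj, ha⟩
    rcases Finset.mem_insert.1 hj with rfl | hj
    · exact Or.inl ha
    · exact Or.inr ⟨j, hj, ha⟩

lemma prob_le_of_one_le {n : ℕ} {w : Edge n → ℝ} (hw : ∀ e, 0 ≤ w e ∧ w e ≤ 1)
    {E : Set (Config n)} {g : Config n → ℝ} (hg0 : ∀ a, 0 ≤ g a) (hg : ∀ a ∈ E, 1 ≤ g a) :
    prob n w E ≤ ∑ a, wt n w a * g a := by
  refine Finset.sum_le_sum fun a _ => ?_
  have h0 := wt_nonneg hw a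
  by_cases h1 : a ∈ E
  · rw [Set.indicator_of_mem h1]
    exact le_mul_of_one_le_right h0 (hg a h1)
  · rw [Set.indicator_of_notMem h1]
    exact mul_nonneg h0 (hg0 a)

/-- The number of edges of the configuration lying in the edge set `F`. -/
noncomputable def cnt {n : ℕ} (F : Finset (Edge n)) (a : Config n) : ℝ :=
  ∑ e ∈ F, if a e then 1 else 0

lemma cnt_nonneg {n : ℕ} (F : Finset (Edge n)) (a : Config n) : 0 ≤ cnt F a :=
  Finset.sum_nonneg fun e _ => by split_ifs <;> norm_num

/-- Bernoulli moment generating functions are dominated by Poisson ones. -/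
lemma mgf_le {n : ℕ} {w : Edge n → ℝ} (hw : ∀ e, 0 ≤ w e ∧ w e ≤ 1)
    (F : Finset (Edge n)) (s : ℝ) :
    ∑ a, wt n w a * Real.exp (s * cnt F a) ≤ Real.exp ((Real.exp s - 1) * ∑ e ∈ F, w e) := by
  classical
  have h1 : ∀ a : Config n, wt n w a * Real.exp (s * cnt F a) =
      ∏ e : Edge n, (if a e then w e else 1 - w e) *
        (if e ∈ F then Real.exp (s * if a e then 1 else 0) else 1) := by
    intro a
    rw [Finset.prod_mul_distrib, wt, cnt, Finset.mul_sum, Real.exp_sum]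
    congr 1
    rw [Finset.prod_ite_mem, Finset.univ_inter]
  have h2 : ∑ a, wt n w a * Real.exp (s * cnt F a) =
      ∏ e : Edge n, ∑ b : Bool, (if b then w e else 1 - w e) *
        (if e ∈ F then Real.exp (s * if b then 1 else 0) else 1) := by
    rw [Finset.prod_univ_sum, Fintype.piFinset_univ]
    exact Finset.sum_congr rfl fun a _ => h1 a
  rw [h2, Finset.mul_sum, Real.exp_sum]
  calc _ ≤ ∏ e : Edge n, (if e ∈ F then Real.exp ((Real.exp s - 1) * w e) else 1) := by
        refine Finset.prod_le_prod (fun e _ => ?_) (fun e _ => ?_)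
        · refine Finset.sum_nonneg fun b _ => mul_nonneg ?_ ?_
          · split_ifs
            · exact (hw e).1
            · linarith [(hw e).2]
          · split_ifs <;> positivity
        · by_cases he : e ∈ F
          · simp only [Fintype.sum_bool, he, if_true]
            simp
            have := Real.add_one_le_exp ((Real.exp s - 1) * w e)
            linarith
          · simp [he]
    _ = _ := by rw [Finset.prod_ite_mem, Finset.univ_inter]

lemma prob_cnt_ge {n : ℕ} {w : Edge n → ℝ} (hw : ∀ e, 0 ≤ w e ∧ w e ≤ 1)
    (F : Finset (Edge n)) {s x : ℝ} (hs : 0 ≤ s) :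
    prob n w {a | x ≤ cnt F a} ≤
      Real.exp ((Real.exp s - 1) * (∑ e ∈ F, w e) - s * x) := by
  have h := prob_le_of_one_le hw (E := {a | x ≤ cnt F a})
    (g := fun a => Real.exp (s * cnt F a) * Real.exp (-(s * x)))
    (fun a => by positivity) (fun a ha => by
      rw [← Real.exp_add]
      have : s * x ≤ s * cnt F a := mul_le_mul_of_nonneg_left ha hs
      exact Real.one_le_exp (by linarith))
  refine h.trans ?_
  simp_rw [← mul_assoc]
  rw [← Finset.sum_mul, sub_eq_add_neg _ (s * x), Real.exp_add]
  exact mul_le_mul_of_nonneg_right (mgf_le hw F s) (Real.exp_pos _).le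

lemma prob_cnt_le {n : ℕ} {w : Edge n → ℝ} (hw : ∀ e, 0 ≤ w e ∧ w e ≤ 1)
    (F : Finset (Edge n)) {s x : ℝ} (hs : 0 ≤ s) :
    prob n w {a | cnt F a ≤ x} ≤
      Real.exp ((Real.exp (-s) - 1) * (∑ e ∈ F, w e) + s * x) := by
  have h := prob_le_of_one_le hw (E := {a | cnt F a ≤ x})
    (g := fun a => Real.exp (-s * cnt F a) * Real.exp (s * x))
    (fun a => by positivity) (fun a ha => by
      rw [← Real.exp_add]
      have : s * cnt F a ≤ s * x := mul_le_mul_of_nonneg_left ha hs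
      exact Real.one_le_exp (by linarith))
  refine h.trans ?_
  simp_rw [← mul_assoc]
  rw [← Finset.sum_mul, Real.exp_add]
  exact mul_le_mul_of_nonneg_right (mgf_le hw F (-s)) (Real.exp_pos _).le

lemma exp_neg_le_quad {s : ℝ} (hs : 0 ≤ s) : Real.exp (-s) ≤ 1 - s + s ^ 2 / 2 := by
  have hd : ∀ y : ℝ, HasDerivAt (fun y : ℝ => 1 - y + y ^ 2 / 2 - Real.exp (-y))
      (-1 + y + Real.exp (-y)) y := by
    intro y
    have h1 : HasDerivAt (fun y : ℝ => Real.exp (-y)) (-Real.exp (-y)) y := by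
      simpa using (hasDerivAt_neg y).exp
    have h2 := (((hasDerivAt_id y).const_sub 1).add
      ((hasDerivAt_pow 2 y).div_const 2)).sub h1
    refine h2.congr_deriv ?_
    simp
  have hm : MonotoneOn (fun y : ℝ => 1 - y + y ^ 2 / 2 - Real.exp (-y)) (Set.Ici 0) := by
    refine monotoneOn_of_deriv_nonneg (convex_Ici 0)
      (fun y hy => (hd y).continuousAt.continuousWithinAt)
      (fun y hy => (hd y).differentiableAt.differentiableWithinAt) ?_
    intro y hy
    rw [(hd y).deriv]
    linarith [Real.add_one_le_exp (-y)]
  have := hm (Set.mem_Ici.2 le_rfl) hs hs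
  norm_num at this
  linarith

/-- Sub-Gaussian lower tail; `B` is any upper bound on the mean. -/
lemma prob_lower {n : ℕ} {w : Edge n → ℝ} (hw : ∀ e, 0 ≤ w e ∧ w e ≤ 1)
    (F : Finset (Edge n)) {K B : ℝ} (hK : 0 ≤ K) (hB : 0 < B) (hM : ∑ e ∈ F, w e ≤ B) :
    prob n w {a | cnt F a ≤ (∑ e ∈ F, w e) - K * √B} ≤ Real.exp (-(K ^ 2 / 2)) := by
  have hsB := Real.sqrt_pos.2 hB
  have hsq := Real.sq_sqrt hB.le
  have hs : 0 ≤ K / √B := by positivity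
  refine (prob_cnt_le hw F hs).trans (Real.exp_le_exp.2 ?_)
  have h1 := exp_neg_le_quad hs
  have hM0 : 0 ≤ ∑ e ∈ F, w e := Finset.sum_nonneg fun e _ => (hw e).1
  set M := ∑ e ∈ F, w e
  have h2 : (Real.exp (-(K / √B)) - 1) * M ≤ (-(K / √B) + (K / √B) ^ 2 / 2) * M :=
    mul_le_mul_of_nonneg_right (by linarith) hM0
  have h3 : (K / √B) ^ 2 / 2 * M ≤ (K / √B) ^ 2 / 2 * B :=
    mul_le_mul_of_nonneg_left hM (by positivity)
  have h4 : (K / √B) ^ 2 * B = K ^ 2 := by rw [div_pow, hsq]; field_simp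
  have h5 : K / √B * (K * √B) = K ^ 2 := by field_simp
  nlinarith

/-- Sub-Gaussian upper tail in the moderate deviation range `K ≤ 2√B`; `B` is any upper bound
on the mean. -/
lemma prob_upper {n : ℕ} {w : Edge n → ℝ} (hw : ∀ e, 0 ≤ w e ∧ w e ≤ 1)
    (F : Finset (Edge n)) {K B : ℝ} (hK : 0 ≤ K) (hB : 0 < B) (hM : ∑ e ∈ F, w e ≤ B)
    (hKB : K ≤ 2 * √B) :
    prob n w {a | (∑ e ∈ F, w e) + K * √B ≤ cnt F a} ≤ Real.exp (-(K ^ 2 / 4)) := by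
  have hsB := Real.sqrt_pos.2 hB
  have hsq := Real.sq_sqrt hB.le
  have hs : 0 ≤ K / (2 * √B) := by positivity
  have hs1 : K / (2 * √B) ≤ 1 := by rw [div_le_one (by positivity)]; exact hKB
  refine (prob_cnt_ge hw F hs).trans (Real.exp_le_exp.2 ?_)
  have h1 : Real.exp (K / (2 * √B)) ≤ 1 + K / (2 * √B) + (K / (2 * √B)) ^ 2 := by
    have := Real.abs_exp_sub_one_sub_id_le (x := K / (2 * √B)) (by rw [abs_of_nonneg hs]; exact hs1)
    have := (abs_le.1 this).2
    linarith
  have hM0 : 0 ≤ ∑ e ∈ F, w e := Finset.sum_nonneg fun e _ => (hw e).1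
  set M := ∑ e ∈ F, w e
  have h2 : (Real.exp (K / (2 * √B)) - 1) * M ≤ (K / (2 * √B) + (K / (2 * √B)) ^ 2) * M :=
    mul_le_mul_of_nonneg_right (by linarith) hM0
  have h3 : (K / (2 * √B)) ^ 2 * M ≤ (K / (2 * √B)) ^ 2 * B :=
    mul_le_mul_of_nonneg_left hM (by positivity)
  have h4 : (K / (2 * √B)) ^ 2 * B = K ^ 2 / 4 := by
    rw [div_pow, mul_pow, hsq]; field_simp; norm_num
  have h5 : K / (2 * √B) * (K * √B) = K ^ 2 / 2 := by field_simp
  nlinarith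

/-- Chernoff's bound, phrased as a bound on the upper tail of the scan statistic itself. -/
lemma prob_scanG_ge {n : ℕ} {w : Edge n → ℝ} (hw : ∀ e, 0 ≤ w e ∧ w e ≤ 1)
    (F : Finset (Edge n)) {y : ℝ} (hM : 0 < ∑ e ∈ F, w e) (hy : 0 < y) :
    prob n w {a | y ≤ scanG (cnt F a) (∑ e ∈ F, w e)} ≤ Real.exp (-y) := by
  classical
  set M := ∑ e ∈ F, w e with hMdef
  by_cases hne : (Finset.univ.filter fun a : Config n => y ≤ scanG (cnt F a) M).Nonempty
  · -- the event is contained in `{x ≤ e(F)}` for the smallest count `x` occurring in it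
    obtain ⟨b, hb, hmin⟩ := Finset.exists_min_image _ (fun a => cnt F a) hne
    rw [Finset.mem_filter] at hb
    have hbM : M ≤ cnt F b := by
      by_contra h
      have := scanG_of_le hM (not_le.1 h).le
      linarith [hb.2]
    have hsub : {a : Config n | y ≤ scanG (cnt F a) M} ⊆ {a | cnt F b ≤ cnt F a} :=
      fun a ha => hmin a (Finset.mem_filter.2 ⟨Finset.mem_univ _, ha⟩)
    have h1 : 1 ≤ cnt F b / M := by rwa [le_div_iff₀ hM, one_mul]
    refine (prob_mono hw hsub).trans ((prob_cnt_ge hw F (Real.log_nonneg h1)).trans ?_)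
    rw [Real.exp_le_exp, Real.exp_log (by linarith), ← hMdef]
    have h2 := hb.2
    rw [scanG_eq hM hbM] at h2
    have : (cnt F b / M - 1) * M = cnt F b - M := by field_simp
    rw [this]; linarith
  · have : {a : Config n | y ≤ scanG (cnt F a) M} = ∅ := by
      ext a
      simp only [Set.mem_ofPred_eq, Set.mem_empty_iff_false, iff_false]
      intro ha
      exact hne ⟨a, Finset.mem_filter.2 ⟨Finset.mem_univ _, ha⟩⟩
    rw [this]
    simp only [prob, Set.indicator_empty, Finset.sum_const_zero]
    exact (Real.exp_pos _).le

/-! ### Rank-1 edge sums -/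

/-- The edges inside `D`. -/
def inE (n : ℕ) (D : Finset (Fin n)) : Finset (Edge n) :=
  Finset.univ.filter fun e => e.1.1 ∈ D ∧ e.1.2 ∈ D

/-- The edges between `D` and its complement. -/
def crossE (n : ℕ) (D : Finset (Fin n)) : Finset (Edge n) :=
  Finset.univ.filter fun e => (e.1.1 ∈ D ∧ e.1.2 ∉ D) ∨ (e.1.1 ∉ D ∧ e.1.2 ∈ D)

lemma eCount_eq_cnt (n : ℕ) (D : Finset (Fin n)) (a : Config n) :
    eCount n D a = cnt (inE n D) a := by
  rw [eCount, cnt, inE, Finset.sum_filter]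
  refine Finset.sum_congr rfl fun e _ => ?_
  by_cases h1 : e.1.1 ∈ D <;> by_cases h2 : e.1.2 ∈ D <;> simp [h1, h2]

lemma inE_univ (n : ℕ) : inE n Finset.univ = Finset.univ := by simp [inE]

lemma eCross_eq_cnt (n : ℕ) (D : Finset (Fin n)) (a : Config n) :
    eCross n D a = cnt (crossE n D) a := by
  rw [eCross, cnt, crossE, Finset.sum_filter]
  refine Finset.sum_congr rfl fun e _ => ?_
  by_cases h1 : e.1.1 ∈ D <;> by_cases h2 : e.1.2 ∈ D <;> simp [h1, h2]

lemma expCount_eq (n : ℕ) (p : Fin n → Fin n → ℝ) (D : Finset (Fin n)) :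
    expCount n p D = ∑ e ∈ inE n D, nullW n p e := by
  rw [expCount, inE, Finset.sum_filter]; rfl

/-- A sum over unordered pairs is half of the off-diagonal double sum. -/
lemma two_mul_sum_edges {n : ℕ} (g : Fin n → Fin n → ℝ) (hg : ∀ i j, g i j = g j i) :
    2 * ∑ e : Edge n, g e.1.1 e.1.2 = (∑ i, ∑ j, g i j) - ∑ i, g i i := by
  have h1 : ∑ e : Edge n, g e.1.1 e.1.2 = ∑ i, ∑ j, if i < j then g i j else 0 := by
    rw [← Fintype.sum_prod_type' (f := fun i j => if i < j then g i j else 0),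
      ← Finset.sum_filter]
    exact (Finset.sum_subtype (p := fun q : Fin n × Fin n => q.1 < q.2)
      (Finset.univ.filter fun q : Fin n × Fin n => q.1 < q.2)
      (by simp) (fun q => g q.1 q.2)).symm
  have h2 : ∑ i, ∑ j, (if i < j then g i j else 0) = ∑ i, ∑ j, if j < i then g i j else 0 := by
    rw [Finset.sum_comm]
    exact Finset.sum_congr rfl fun i _ => Finset.sum_congr rfl fun j _ => by rw [hg]
  have h3 : ∑ i, g i i = ∑ i, ∑ j, if i = j then g i j else 0 := by simp
  rw [two_mul, eq_sub_iff_add_eq, h3]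
  nth_rewrite 2 [h1.trans h2]
  rw [h1, ← Finset.sum_add_distrib, ← Finset.sum_add_distrib]
  refine Finset.sum_congr rfl fun i _ => ?_
  rw [← Finset.sum_add_distrib, ← Finset.sum_add_distrib]
  refine Finset.sum_congr rfl fun j _ => ?_
  rcases lt_trichotomy i j with h | h | h
  · simp [h, h.ne, h.not_gt]
  · simp [h]
  · simp [h, h.ne', h.not_gt]

lemma sum_in_rank1 {n : ℕ} (θ : Fin n → ℝ) (D : Finset (Fin n)) :
    2 * ∑ e : Edge n, (if e.1.1 ∈ D ∧ e.1.2 ∈ D then θ e.1.1 * θ e.1.2 else 0) =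
      (∑ i ∈ D, θ i) ^ 2 - ∑ i ∈ D, θ i ^ 2 := by
  rw [two_mul_sum_edges (fun i j => if i ∈ D ∧ j ∈ D then θ i * θ j else 0)
    (fun i j => by simp only [and_comm, mul_comm])]
  congr 1
  · have : ∀ i j : Fin n, (if i ∈ D ∧ j ∈ D then θ i * θ j else 0) =
        (if i ∈ D then θ i else 0) * (if j ∈ D then θ j else 0) := by
      intro i j; by_cases h1 : i ∈ D <;> by_cases h2 : j ∈ D <;> simp [h1, h2]
    simp_rw [this, ← Finset.mul_sum, ← Finset.sum_mul]
    rw [Finset.sum_ite_mem, Finset.univ_inter, sq]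
  · have : ∀ i : Fin n, (if i ∈ D ∧ i ∈ D then θ i * θ i else 0) =
        if i ∈ D then θ i ^ 2 else 0 := by intro i; simp only [and_self, sq]
    simp_rw [this]
    rw [Finset.sum_ite_mem, Finset.univ_inter]

lemma sum_cross_rank1 {n : ℕ} (θ : Fin n → ℝ) {C D : Finset (Fin n)} (hDC : D ⊆ C) :
    ∑ e ∈ crossE n D, (if e.1.1 ∈ C ∧ e.1.2 ∈ C then θ e.1.1 * θ e.1.2 else 0) =
      (∑ i ∈ D, θ i) * ((∑ i ∈ C, θ i) - ∑ i ∈ D, θ i) := by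
  classical
  set f : Fin n → ℝ := fun i => if i ∈ D then θ i else 0 with hf
  set g : Fin n → ℝ := fun i => if i ∈ C \ D then θ i else 0 with hg
  have h1 : ∑ e ∈ crossE n D, (if e.1.1 ∈ C ∧ e.1.2 ∈ C then θ e.1.1 * θ e.1.2 else 0) =
      ∑ e : Edge n, (fun i j => f i * g j + g i * f j) e.1.1 e.1.2 := by
    rw [crossE, Finset.sum_filter]
    refine Finset.sum_congr rfl fun e _ => ?_
    have a1 := @hDC e.1.1
    have a2 := @hDC e.1.2
    by_cases h1 : e.1.1 ∈ D <;> by_cases h2 : e.1.2 ∈ D <;>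
      by_cases h3 : e.1.1 ∈ C <;> by_cases h4 : e.1.2 ∈ C <;> simp_all
  have h2 := two_mul_sum_edges (fun i j => f i * g j + g i * f j)
    (fun i j => by ring)
  have h3 : ∑ i, (f i * g i + g i * f i) = 0 := by
    refine Finset.sum_eq_zero fun i _ => ?_
    by_cases h : i ∈ D <;> simp [hf, hg, h]
  have h4 : ∑ i, f i = ∑ i ∈ D, θ i := by rw [hf, Finset.sum_ite_mem, Finset.univ_inter]
  have h5 : ∑ i, g i = (∑ i ∈ C, θ i) - ∑ i ∈ D, θ i := by
    rw [hg, Finset.sum_ite_mem, Finset.univ_inter, ← Finset.sum_sdiff hDC]; ring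
  have h6 : ∑ i, ∑ j, (f i * g j + g i * f j) = 2 * ((∑ i, f i) * ∑ i, g i) := by
    simp_rw [Finset.sum_add_distrib, ← Finset.mul_sum, ← Finset.sum_mul]; ring
  rw [h1, ← h5, ← h4]
  simp only [] at h2 ⊢
  rw [h3, h6] at h2
  linarith

lemma two_mul_expCount {n : ℕ} {p : Fin n → Fin n → ℝ} {θ : Fin n → ℝ}
    (hp : ∀ i j, p i j = θ i * θ j) (D : Finset (Fin n)) :
    2 * expCount n p D = (∑ i ∈ D, θ i) ^ 2 - ∑ i ∈ D, θ i ^ 2 := by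
  rw [← sum_in_rank1, expCount]
  simp_rw [hp]

lemma sum_cross_null {n : ℕ} {p : Fin n → Fin n → ℝ} {θ : Fin n → ℝ}
    (hp : ∀ i j, p i j = θ i * θ j) (D : Finset (Fin n)) :
    ∑ e ∈ crossE n D, nullW n p e = (∑ i ∈ D, θ i) * ((∑ i, θ i) - ∑ i ∈ D, θ i) := by
  rw [← sum_cross_rank1 θ (Finset.subset_univ D)]
  simp [nullW, hp]

lemma altW_eq {n : ℕ} (p : Fin n → Fin n → ℝ) (lam : ℝ) (C : Finset (Fin n)) (e : Edge n) :
    altW n p lam C e = nullW n p e +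
      (lam - 1) * (if e.1.1 ∈ C ∧ e.1.2 ∈ C then p e.1.1 e.1.2 else 0) := by
  unfold altW nullW
  split_ifs <;> ring

lemma sum_in_alt {n : ℕ} (p : Fin n → Fin n → ℝ) (lam : ℝ) {C D : Finset (Fin n)}
    (hDC : D ⊆ C) : ∑ e ∈ inE n D, altW n p lam C e = lam * expCount n p D := by
  rw [expCount_eq, Finset.mul_sum]
  refine Finset.sum_congr rfl fun e he => ?_
  rw [inE, Finset.mem_filter] at he
  rw [altW, if_pos ⟨hDC he.2.1, hDC he.2.2⟩, nullW]

lemma sum_univ_alt {n : ℕ} (p : Fin n → Fin n → ℝ) (lam : ℝ) (C : Finset (Fin n)) :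
    ∑ e, altW n p lam C e = expCount n p Finset.univ + (lam - 1) * expCount n p C := by
  simp_rw [altW_eq]
  rw [Finset.sum_add_distrib, ← Finset.mul_sum, expCount_eq, inE_univ]
  rfl

lemma sum_cross_alt {n : ℕ} {p : Fin n → Fin n → ℝ} {θ : Fin n → ℝ}
    (hp : ∀ i j, p i j = θ i * θ j) (lam : ℝ) {C D : Finset (Fin n)} (hDC : D ⊆ C) :
    ∑ e ∈ crossE n D, altW n p lam C e =
      (∑ i ∈ D, θ i) * ((∑ i, θ i) - ∑ i ∈ D, θ i) +
      (lam - 1) * ((∑ i ∈ D, θ i) * ((∑ i ∈ C, θ i) - ∑ i ∈ D, θ i)) := by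
  simp_rw [altW_eq]
  rw [Finset.sum_add_distrib, ← Finset.mul_sum, sum_cross_null hp]
  congr 2
  rw [← sum_cross_rank1 θ hDC]
  simp_rw [hp]

/-! ### The union bound over vertex sets -/

/-- `∑_D exp(-(1+α)|D| log(n/|D|))` over nonempty `D` with `|D| ≤ r` is small once
`log(n/r)` is large: `C(n,k) ≤ (en/k)^k` leaves a geometric series. -/
lemma sum_sets_le {n r : ℕ} (hn : 0 < n) {α Λ : ℝ} (hα : 0 < α)
    (hΛ : ∀ k : ℕ, 1 ≤ k → k ≤ r → Λ ≤ Real.log ((n : ℝ) / k)) (hΛ1 : 2 ≤ α * Λ) :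
    ∑ D ∈ (Finset.univ : Finset (Finset (Fin n))).filter (fun D => 1 ≤ D.card ∧ D.card ≤ r),
      Real.exp (-((1 + α) * ((D.card : ℝ) * Real.log ((n : ℝ) / D.card)))) ≤
      2 * Real.exp (-(α * Λ - 1)) := by
  have h1 : ∑ D ∈ (Finset.univ : Finset (Finset (Fin n))).filter
        (fun D => 1 ≤ D.card ∧ D.card ≤ r),
      Real.exp (-((1 + α) * ((D.card : ℝ) * Real.log ((n : ℝ) / D.card)))) =
      ∑ k ∈ Finset.range (n + 1), n.choose k • (if 1 ≤ k ∧ k ≤ r then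
        Real.exp (-((1 + α) * ((k : ℝ) * Real.log ((n : ℝ) / k)))) else 0) := by
    have h := Finset.sum_powerset_apply_card (fun k : ℕ => if 1 ≤ k ∧ k ≤ r then
        Real.exp (-((1 + α) * ((k : ℝ) * Real.log ((n : ℝ) / k)))) else 0)
        (x := (Finset.univ : Finset (Fin n)))
    rw [Finset.card_univ, Fintype.card_fin, Finset.powerset_univ] at h
    rw [Finset.sum_filter]
    exact h
  rw [h1]
  set q : ℝ := Real.exp (-(α * Λ - 1)) with hq
  have hq0 : 0 < q := Real.exp_pos _
  have hq1 : q ≤ 1 / 2 := by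
    have h2 : Real.exp (-(α * Λ - 1)) ≤ Real.exp (-1) := Real.exp_le_exp.2 (by linarith)
    have h3 : Real.exp (-1) < 1 / 2 := by
      have := Real.exp_neg_one_lt_d9; linarith
    linarith
  have hterm : ∀ k ∈ Finset.range (n + 1), (n.choose k • (if 1 ≤ k ∧ k ≤ r then
        Real.exp (-((1 + α) * ((k : ℝ) * Real.log ((n : ℝ) / k)))) else 0) : ℝ) ≤
        if k = 0 then 0 else q ^ k := by
    intro k _
    rcases Nat.eq_zero_or_pos k with rfl | hk
    · simp
    rw [if_neg hk.ne', nsmul_eq_mul]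
    split_ifs with hc
    swap
    · rw [mul_zero]; positivity
    have hk' : (0 : ℝ) < k := by exact_mod_cast hk
    have hn' : (0 : ℝ) < n := by exact_mod_cast hn
    have hL := hΛ k hc.1 hc.2
    set l := Real.log ((n : ℝ) / k) with hl
    have e1 : Real.exp (-((k : ℝ) * l)) = ((k : ℝ) / n) ^ k := by
      rw [← mul_neg, Real.exp_nat_mul, hl, ← Real.log_inv, inv_div,
        Real.exp_log (by positivity)]
    have e2 : (n.choose k : ℝ) * ((k : ℝ) / n) ^ k ≤ Real.exp k := by
      calc (n.choose k : ℝ) * ((k : ℝ) / n) ^ k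
          ≤ ((n : ℝ) ^ k / k.factorial) * ((k : ℝ) / n) ^ k :=
            mul_le_mul_of_nonneg_right (Nat.choose_le_pow_div k n) (by positivity)
        _ = (k : ℝ) ^ k / k.factorial := by rw [div_pow]; field_simp
        _ ≤ Real.exp k := Real.pow_div_factorial_le_exp _ hk'.le k
    have e3 : Real.exp (-((1 + α) * ((k : ℝ) * l))) =
        Real.exp (-((k : ℝ) * l)) * Real.exp (-(α * (k * l))) := by
      rw [← Real.exp_add]; congr 1; ring
    rw [e3, e1, ← mul_assoc]
    refine (mul_le_mul_of_nonneg_right e2 (Real.exp_pos _).le).trans ?_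
    rw [hq, ← Real.exp_nat_mul, ← Real.exp_add, Real.exp_le_exp]
    have : α * Λ * k ≤ α * l * k := by gcongr
    nlinarith
  refine (Finset.sum_le_sum hterm).trans ?_
  rw [Finset.sum_range_succ']
  simp only [Nat.add_eq_zero_iff, one_ne_zero, and_false, if_false, if_true, add_zero]
  have hg : ∑ i ∈ Finset.range n, q ^ (i + 1) = q * ∑ i ∈ Finset.range n, q ^ i := by
    rw [Finset.mul_sum]; exact Finset.sum_congr rfl fun i _ => by ring
  rw [hg]
  have hgeo : ∑ i ∈ Finset.range n, q ^ i ≤ (1 - q)⁻¹ :=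
    (Summable.sum_le_tsum _ (fun i _ => by positivity)
      (summable_geometric_of_lt_one hq0.le (by linarith))).trans
      (tsum_geometric_of_lt_one hq0.le (by linarith)).le
  have : (1 - q)⁻¹ ≤ 2 := by
    rw [inv_le_comm₀ (by linarith) (by norm_num)]; linarith
  nlinarith

/-! ### Deterministic bounds on the estimator and on the scan statistic -/

/-- The estimator `ê` as a function of the total count `v` and the crossing count `m`. -/
noncomputable def estF (v m : ℝ) : ℝ := (√v - √(v - 2 * m)) ^ 2 / 4

/-- If `v ≤ S²/2` and `m ≥ d(S-d)`, then `ê ≥ d²/2`. -/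
lemma estF_ge {v m m' S d : ℝ} (hd : 0 ≤ d) (hS : 2 * d ≤ S) (hmv : 2 * m ≤ v)
    (hv : v ≤ S ^ 2 / 2) (hm : m ≤ m') (hdm : d * (S - d) ≤ m) : d ^ 2 / 2 ≤ estF v m' := by
  have hS0 : 0 ≤ S := by linarith
  have h2 : √2 ^ 2 = (2 : ℝ) := Real.sq_sqrt (by norm_num)
  have h20 : 0 < √(2 : ℝ) := Real.sqrt_pos.2 (by norm_num)
  have hv0 : 0 ≤ v := by nlinarith
  have hvS : √2 * √v ≤ S := by
    rw [← Real.sqrt_mul (by norm_num)]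
    exact (Real.sqrt_le_left hS0).2 (by linarith)
  have hvd : √2 * d ≤ √v := by
    refine Real.le_sqrt_of_sq_le ?_
    rw [mul_pow, h2]; nlinarith
  have h3 : √(v - 2 * m') ≤ √v - √2 * d := by
    refine (Real.sqrt_le_left (by linarith)).2 ?_
    have h4 := Real.sq_sqrt hv0
    have h5 : √2 * √v * d ≤ S * d := mul_le_mul_of_nonneg_right hvS hd
    have h6 : (√v - √2 * d) ^ 2 = √v ^ 2 - 2 * (√2 * √v * d) + √2 ^ 2 * d ^ 2 := by ring
    rw [h6, h4, h2]
    linarith [show d * (S - d) = S * d - d ^ 2 by ring]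
  have h6 : √2 * d ≤ √v - √(v - 2 * m') := by linarith
  have h7 : (√2 * d) ^ 2 ≤ (√v - √(v - 2 * m')) ^ 2 :=
    pow_le_pow_left₀ (by positivity) h6 2
  rw [mul_pow, h2] at h7
  unfold estF; linarith

/-- If `v ≥ S²/2` and `m ≤ d(S-d)`, then `ê ≤ d²/2`. -/
lemma estF_le {v m S d : ℝ} (hd : 0 ≤ d) (hm : 0 ≤ m)
    (hv : S ^ 2 / 2 ≤ v) (hdm : m ≤ d * (S - d)) : estF v m ≤ d ^ 2 / 2 := by
  have h2 : √2 ^ 2 = (2 : ℝ) := Real.sq_sqrt (by norm_num)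
  have hv0 : 0 ≤ v := le_trans (by positivity) hv
  have hvS : S ≤ √2 * √v := by
    rw [← Real.sqrt_mul (by norm_num)]
    exact Real.le_sqrt_of_sq_le (by linarith)
  have h3 : √v - √2 * d ≤ √(v - 2 * m) := by
    refine Real.le_sqrt_of_sq_le ?_
    have h4 := Real.sq_sqrt hv0
    have h5 : S * d ≤ √2 * √v * d := mul_le_mul_of_nonneg_right hvS hd
    have h6 : (√v - √2 * d) ^ 2 = √v ^ 2 - 2 * (√2 * √v * d) + √2 ^ 2 * d ^ 2 := by ring
    rw [h6, h4, h2]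
    linarith [show d * (S - d) = S * d - d ^ 2 by ring]
  have h8 : √(v - 2 * m) ≤ √v := Real.sqrt_le_sqrt (by linarith)
  have h7 : (√v - √(v - 2 * m)) ^ 2 ≤ (√2 * d) ^ 2 :=
    pow_le_pow_left₀ (by linarith) (by linarith) 2
  rw [mul_pow, h2] at h7
  unfold estF; linarith

/-- Lower bound on the estimator from a lower bound on the crossing count with relative error
`2u` and an upper bound on the total count. -/
lemma estF_lower {v m S d K u c : ℝ} (hd : 0 < d) (hdS : d ≤ S / 8) (hK : 0 ≤ K) (hu : 0 ≤ u)
    (hv1 : S ^ 2 / 4 ≤ v) (hv2 : v ≤ S ^ 2 / 2 + K * S)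
    (hm : d * (S - d) * (1 - 2 * u) ≤ m)
    (hc : c = 2 * (2 * u + K / (S - d))) (hc1 : c ≤ 1) :
    (1 - c) ^ 2 * d ^ 2 / 2 ≤ estF v m := by
  have hS : 0 < S := by linarith
  have hR : 0 < S - d := by linarith
  set R := S - d with hRdef
  have hKR : K = R * (c / 2 - 2 * u) := by rw [hc]; field_simp; ring
  have hKd : 0 ≤ K / R := by positivity
  have huc : 2 * u ≤ c / 2 := by rw [hc]; linarith
  have hc0 : 0 ≤ c := by linarith
  rw [← mul_pow]
  refine estF_ge (S := S + K) (m := d * R * (1 - 2 * u)) (mul_nonneg (by linarith) hd.le)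
    ?_ ?_ ?_ hm ?_
  · nlinarith
  · have h1 : d * R * (1 - 2 * u) ≤ d * R := mul_le_of_le_one_right (by positivity) (by linarith)
    have h2 : d * R ≤ S / 8 * S := mul_le_mul hdS (by linarith) hR.le (by linarith)
    nlinarith
  · nlinarith
  · have hdR : 7 * d ≤ R := by linarith
    have e1 : S + K - (1 - c) * d ≤ R * (1 + 9 / 14 * c - 2 * u) := by
      have : S = R + d := by rw [hRdef]; ring
      rw [this, hKR]
      nlinarith
    have e2 : (1 - c) * (1 + 9 / 14 * c - 2 * u) ≤ 1 - 2 * u := by nlinarith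
    calc (1 - c) * d * (S + K - (1 - c) * d)
        ≤ (1 - c) * d * (R * (1 + 9 / 14 * c - 2 * u)) :=
          mul_le_mul_of_nonneg_left e1 (mul_nonneg (by linarith) hd.le)
      _ = d * R * ((1 - c) * (1 + 9 / 14 * c - 2 * u)) := by ring
      _ ≤ d * R * (1 - 2 * u) := mul_le_mul_of_nonneg_left e2 (by positivity)

/-- Replacing the mean `E` by an underestimate `μ ≥ (1-c)² E` inflates the scan statistic only
slightly, provided `c` is small and `c² E` is negligible against the threshold scale `L`.
Either the observed excess dominates the estimation error, and the scan statistic changes by a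
factor close to `1`; or the excess is of order `c`, and the scan statistic is at most of order
`c² E`. -/
lemma scan_transfer {ε e1 c E L μ x : ℝ} (he0 : 0 < e1) (he1 : e1 ≤ 1) (hεe : e1 ≤ ε)
    (hc0 : 0 ≤ c) (hc1 : c ≤ e1 / 64) (hE : 0 < E) (hL : 0 < L)
    (hcE : c ^ 2 * E ≤ (e1 / 64) ^ 2 / 64 * L) (hμ : (1 - c) ^ 2 * E ≤ μ)
    (h : (1 + ε / 3) * L ≤ scanG x μ) : (1 + e1 / 6) * L ≤ scanG x E := by
  set b := e1 / 64 with hb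
  have hb0 : 0 < b := by positivity
  set s := (1 - c) ^ 2 with hs
  have hc2 : c ≤ 1 / 64 := by linarith
  have hs1 : 1 - 2 * c ≤ s := by nlinarith
  have hs2 : s ≤ 1 := by nlinarith
  have hs0 : 0 < s := by linarith
  have hsE : 0 < s * E := by positivity
  have h1 : (1 + e1 / 3) * L ≤ scanG x (s * E) := by
    refine le_trans ?_ (h.trans (scanG_anti hsE hμ))
    gcongr
  set y := x / E - 1 with hy
  set z := x / (s * E) - 1 with hz
  have hzy : z * s = y + 1 - s := by rw [hz, hy]; field_simp; ring
  have hzpos : 0 < z := by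
    by_contra hneg
    rw [scanG, ← hz, max_eq_right (not_lt.1 hneg), hFun_zero, mul_zero] at h1
    have : 0 < (1 + e1 / 3) * L := by positivity
    linarith
  rw [scanG, ← hz, max_eq_left hzpos.le] at h1
  by_cases hcase : 1 - s ≤ b * y
  · have hy0 : 0 ≤ y := by
      by_contra hneg
      nlinarith [mul_neg_of_pos_of_neg hb0 (not_le.1 hneg)]
    rw [scanG, ← hy, max_eq_left hy0]
    -- `z ≤ (1+b)/s · y`, so `h(y) ≥ (s/(1+b))² h(z)`
    have hq0 : 0 ≤ s / (1 + b) := by positivity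
    have hq1 : s / (1 + b) ≤ 1 := by rw [div_le_one (by positivity)]; linarith
    have h2 := hFun_mul_ge hq0 hq1 hzpos.le
    have h3 : s / (1 + b) * z ≤ y := by
      rw [div_mul_eq_mul_div, div_le_iff₀ (by positivity)]; linarith
    have h4 := h2.trans (hFun_mono (by positivity) h3)
    have hb1 : b ≤ 1 / 64 := by linarith
    have h5 : (1 + e1 / 6) * (1 + b) ^ 2 ≤ (1 + e1 / 3) * s := by
      have hε1 : e1 = 64 * b := by rw [hb]; ring
      have e2 : (1 + b) ^ 2 ≤ 1 + 3 * b := by nlinarith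
      have e3 : (1 + e1 / 3) * (1 - 2 * b) ≤ (1 + e1 / 3) * s :=
        mul_le_mul_of_nonneg_left (by linarith) (by linarith)
      have e4 : (1 + e1 / 6) * (1 + b) ^ 2 ≤ (1 + e1 / 6) * (1 + 3 * b) :=
        mul_le_mul_of_nonneg_left e2 (by linarith)
      have e5 : b * b ≤ 1 / 64 * b := mul_le_mul_of_nonneg_right hb1 hb0.le
      rw [hε1] at e3 e4 ⊢
      linarith
    have h6 : (1 + b) ^ 2 * (s / (1 + b)) ^ 2 = s ^ 2 := by field_simp
    have h7 : s ^ 2 * hFun z ≤ (1 + b) ^ 2 * hFun y := by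
      rw [← h6, mul_assoc]; exact mul_le_mul_of_nonneg_left h4 (by positivity)
    have h8 : (1 + b) ^ 2 * ((1 + e1 / 6) * L) ≤ (1 + b) ^ 2 * (E * hFun y) := by
      calc (1 + b) ^ 2 * ((1 + e1 / 6) * L) = (1 + e1 / 6) * (1 + b) ^ 2 * L := by ring
        _ ≤ (1 + e1 / 3) * s * L := mul_le_mul_of_nonneg_right h5 hL.le
        _ = s * ((1 + e1 / 3) * L) := by ring
        _ ≤ s * (s * E * hFun z) := mul_le_mul_of_nonneg_left h1 hs0.le
        _ = E * (s ^ 2 * hFun z) := by ring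
        _ ≤ E * ((1 + b) ^ 2 * hFun y) := mul_le_mul_of_nonneg_left h7 hE.le
        _ = _ := by ring
    exact le_of_mul_le_mul_left h8 (by positivity)
  · exfalso
    push Not at hcase
    have h2 := hFun_le_sq hzpos.le
    have hbz : b * z ≤ 5 * c := by
      have h3 : b * (z * s) < (1 - s) * (1 + b) := by rw [hzy]; linarith
      have h4 : (1 - s) * (1 + b) ≤ 2 * c * (65 / 64) :=
        mul_le_mul (by linarith) (by linarith) (by positivity) (by positivity)
      have h5 : b * z * (62 / 64) ≤ b * z * s :=
        mul_le_mul_of_nonneg_left (by linarith) (by positivity)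
      linarith
    have hbz2 : (b * z) ^ 2 ≤ (5 * c) ^ 2 := pow_le_pow_left₀ (by positivity) hbz 2
    have h3 : b ^ 2 * (E * z ^ 2) ≤ b ^ 2 * (25 / 64 * L) := by
      calc b ^ 2 * (E * z ^ 2) = (b * z) ^ 2 * E := by ring
        _ ≤ (5 * c) ^ 2 * E := mul_le_mul_of_nonneg_right hbz2 hE.le
        _ = 25 * (c ^ 2 * E) := by ring
        _ ≤ 25 * (b ^ 2 / 64 * L) := by linarith
        _ = _ := by ring
    have h4 : E * z ^ 2 ≤ 25 / 64 * L := le_of_mul_le_mul_left h3 (by positivity)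
    have h5 : s * E * hFun z ≤ E * (z ^ 2 / 2) :=
      mul_le_mul (mul_le_of_le_one_left hE.le hs2) h2 (hFun_nonneg hzpos.le) hE.le
    have h6 : 0 ≤ e1 / 3 * L := by positivity
    linarith

/-! ### Quantitative form of the assumptions -/

/-- Assumption 3 and `r = o(n)` at a fixed `n`, with explicit small `σ` and large `Λ`. Here
`t ≤ θ i ≤ T` are the extreme weights. -/
structure Good {n : ℕ} (r : ℕ) (θ : Fin n → ℝ) (t T σ Λ : ℝ) : Prop where
  ht : 0 < t
  hle : ∀ i, t ≤ θ i
  hge : ∀ i, θ i ≤ T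
  htT : t ≤ T
  hT : T ≤ 1
  hr : 1 < r
  hrn : r < n
  hσ : 0 < σ
  hσ1 : σ ≤ 1 / 100
  h1 : T ^ 2 ≤ σ ^ 2 * t ^ 2 * (r : ℝ) ^ ((2 : ℝ) / 3)
  h2 : r * T ^ 2 ≤ σ ^ 2 * n * t ^ 4
  hΛ : Λ ≤ Real.log ((n : ℝ) / r)
  hΛ1 : 1 ≤ Λ

namespace Good

variable {n r : ℕ} {θ : Fin n → ℝ} {t T σ Λ : ℝ}

lemma hn (H : Good r θ t T σ Λ) : (0 : ℝ) < n := by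
  have := H.hr; have := H.hrn; exact_mod_cast (by omega : 0 < n)

lemma rpos (H : Good r θ t T σ Λ) : (1 : ℝ) ≤ r := by
  have := H.hr; exact_mod_cast this.le

lemma θpos (H : Good r θ t T σ Λ) (i : Fin n) : 0 < θ i := H.ht.trans_le (H.hle i)

lemma nt2 (H : Good r θ t T σ Λ) : r ≤ σ ^ 2 * (n * t ^ 2) := by
  have h := H.h2
  have ht := H.ht
  have h3 : (r : ℝ) * t ^ 2 ≤ r * T ^ 2 := by
    gcongr; exact H.htT
  have h4 : (r : ℝ) * t ^ 2 ≤ σ ^ 2 * (n * t ^ 2) * t ^ 2 := by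
    have : σ ^ 2 * (n * t ^ 2) * t ^ 2 = σ ^ 2 * n * t ^ 4 := by ring
    linarith
  exact le_of_mul_le_mul_right h4 (by positivity)

lemma rT (H : Good r θ t T σ Λ) : r * T ≤ σ ^ 2 * (n * t) := by
  have h := H.h2
  have ht := H.ht
  have hT := ht.trans_le H.htT
  have hn := H.hn
  have h3 : (r : ℝ) * T * t ≤ r * T * T := by
    gcongr; exact H.htT
  have h5 : t ^ 2 ≤ 1 := by
    have := H.htT.trans H.hT
    nlinarith
  have h4 : (r : ℝ) * T * t ≤ σ ^ 2 * (n * t) * t := by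
    calc (r : ℝ) * T * t ≤ σ ^ 2 * n * t ^ 4 := by
          have : (r : ℝ) * T * T = r * T ^ 2 := by ring
          linarith
      _ = σ ^ 2 * n * t ^ 2 * t ^ 2 := by ring
      _ ≤ σ ^ 2 * n * t ^ 2 * 1 := by gcongr
      _ = _ := by ring
  exact le_of_mul_le_mul_right h4 ht

lemma sum_ge (H : Good r θ t T σ Λ) (D : Finset (Fin n)) : D.card * t ≤ ∑ i ∈ D, θ i := by
  rw [← nsmul_eq_mul]; exact Finset.card_nsmul_le_sum _ _ _ fun i _ => H.hle i

lemma sum_le (H : Good r θ t T σ Λ) (D : Finset (Fin n)) : ∑ i ∈ D, θ i ≤ D.card * T := by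
  rw [← nsmul_eq_mul]; exact Finset.sum_le_card_nsmul _ _ _ fun i _ => H.hge i

lemma S_ge (H : Good r θ t T σ Λ) : n * t ≤ ∑ i, θ i := by
  have := H.sum_ge Finset.univ
  rwa [Finset.card_univ, Fintype.card_fin] at this

lemma S_pos (H : Good r θ t T σ Λ) : 0 < ∑ i, θ i :=
  (mul_pos H.hn H.ht).trans_le H.S_ge

lemma dS (H : Good r θ t T σ Λ) {D : Finset (Fin n)} (hD : D.card ≤ r) :
    ∑ i ∈ D, θ i ≤ σ ^ 2 * ∑ i, θ i := by
  have hT := H.ht.trans_le H.htT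
  calc ∑ i ∈ D, θ i ≤ D.card * T := H.sum_le D
    _ ≤ r * T := by gcongr
    _ ≤ σ ^ 2 * (n * t) := H.rT
    _ ≤ _ := by gcongr; exact H.S_ge

lemma S_large (H : Good r θ t T σ Λ) : 1 ≤ σ * ∑ i, θ i := by
  have hσ := H.hσ
  have h1 := H.nt2
  have hS := H.S_pos
  have h2 : (n * t) * (n * t) ≤ (∑ i, θ i) * ∑ i, θ i :=
    mul_le_mul H.S_ge H.S_ge (mul_pos H.hn H.ht).le hS.le
  have h3 : (1 : ℝ) ≤ n := by
    have := H.hr; have := H.hrn; exact_mod_cast (by omega : 1 ≤ n)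
  have h4 := H.rpos
  have h5 : σ ^ 2 * (n * t ^ 2) ≤ σ ^ 2 * (n * t ^ 2) * n :=
    le_mul_of_one_le_right (by have := H.ht; positivity) h3
  have h6 : 1 ≤ (σ * ∑ i, θ i) ^ 2 := by
    calc (1 : ℝ) ≤ σ ^ 2 * (n * t ^ 2) * n := by linarith
      _ = σ ^ 2 * ((n * t) * (n * t)) := by ring
      _ ≤ σ ^ 2 * ((∑ i, θ i) * ∑ i, θ i) := by gcongr
      _ = _ := by ring
  by_contra hlt
  push Not at hlt
  have : 0 ≤ σ * ∑ i, θ i := by positivity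
  nlinarith

lemma T_le (H : Good r θ t T σ Λ) {D : Finset (Fin n)}
    (hD : (r : ℝ) ^ ((1 : ℝ) / 3) ≤ D.card) : T ≤ σ * ∑ i ∈ D, θ i := by
  have h1 := H.h1
  have ht := H.ht
  have hσ := H.hσ
  have h2 : (r : ℝ) ^ ((2 : ℝ) / 3) = ((r : ℝ) ^ ((1 : ℝ) / 3)) ^ 2 := by
    rw [← Real.rpow_natCast, ← Real.rpow_mul (by positivity)]; norm_num
  have h0 : 0 ≤ (r : ℝ) ^ ((1 : ℝ) / 3) := by positivity
  rw [h2, ← mul_pow, ← mul_pow] at h1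
  have h3 : T ≤ σ * t * (r : ℝ) ^ ((1 : ℝ) / 3) := le_of_sq_le_sq h1 (by positivity)
  calc T ≤ σ * t * (r : ℝ) ^ ((1 : ℝ) / 3) := h3
    _ ≤ σ * t * D.card := by gcongr
    _ = σ * (D.card * t) := by ring
    _ ≤ _ := by gcongr; exact H.sum_ge D

lemma one_lt_card (H : Good r θ t T σ Λ) {D : Finset (Fin n)}
    (hD : (r : ℝ) ^ ((1 : ℝ) / 3) ≤ D.card) : 1 < D.card := by
  have h1 : (1 : ℝ) < r := by exact_mod_cast H.hr
  have h2 : (1 : ℝ) < (r : ℝ) ^ ((1 : ℝ) / 3) := Real.one_lt_rpow h1 (by norm_num)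
  exact_mod_cast h2.trans_le hD

lemma log_ge (H : Good r θ t T σ Λ) {k : ℕ} (hk : 1 ≤ k) (hkr : k ≤ r) :
    Λ ≤ Real.log ((n : ℝ) / k) := by
  have hn := H.hn
  have hk' : (0 : ℝ) < k := by exact_mod_cast hk
  have hr := H.rpos
  refine H.hΛ.trans (Real.log_le_log (by positivity) ?_)
  gcongr

lemma sq_sum_le (H : Good r θ t T σ Λ) (D : Finset (Fin n)) :
    ∑ i ∈ D, θ i ^ 2 ≤ T * ∑ i ∈ D, θ i := by
  rw [Finset.mul_sum]
  refine Finset.sum_le_sum fun i _ => ?_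
  rw [sq]
  exact mul_le_mul_of_nonneg_right (H.hge i) (H.θpos i).le

end Good

/-! ### The type I error -/

namespace Good

variable {n r : ℕ} {θ : Fin n → ℝ} {t T σ Λ : ℝ}

lemma expCount_le (_H : Good r θ t T σ Λ) {p : Fin n → Fin n → ℝ}
    (hp : ∀ i j, p i j = θ i * θ j) (D : Finset (Fin n)) :
    expCount n p D ≤ (∑ i ∈ D, θ i) ^ 2 / 2 := by
  have h1 := two_mul_expCount hp D
  have h2 : 0 ≤ ∑ i ∈ D, θ i ^ 2 := Finset.sum_nonneg fun i _ => sq_nonneg _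
  linarith

lemma expCount_ge (H : Good r θ t T σ Λ) {p : Fin n → Fin n → ℝ}
    (hp : ∀ i j, p i j = θ i * θ j) (D : Finset (Fin n)) :
    ((∑ i ∈ D, θ i) ^ 2 - T * ∑ i ∈ D, θ i) / 2 ≤ expCount n p D := by
  have h1 := two_mul_expCount hp D
  have h2 := H.sq_sum_le D
  linarith

lemma d_pos (H : Good r θ t T σ Λ) {D : Finset (Fin n)} (hD : 0 < D.card) :
    0 < ∑ i ∈ D, θ i := by
  have ht := H.ht
  have : (0 : ℝ) < D.card := by exact_mod_cast hD
  exact lt_of_lt_of_le (by positivity) (H.sum_ge D)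

lemma expCount_pos (H : Good r θ t T σ Λ) {p : Fin n → Fin n → ℝ}
    (hp : ∀ i j, p i j = θ i * θ j) {D : Finset (Fin n)}
    (hD : (r : ℝ) ^ ((1 : ℝ) / 3) ≤ D.card) : 0 < expCount n p D := by
  have h1 := H.expCount_ge hp D
  have h2 := H.T_le hD
  have h3 := H.d_pos (zero_lt_one.trans (H.one_lt_card hD))
  have h4 := H.hσ1
  have h5 : T < ∑ i ∈ D, θ i := by nlinarith
  nlinarith

/-- The accumulated relative error of the estimator `ê(D)`, where `R = S - d`, `k l = |D| log(n/|D|)`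
and `u` is the relative scale of the fluctuations of the crossing count: its square times
`E = E₀[e(D)]` is a small fraction of `k l`, as required for the transfer of the scan statistic. -/
lemma err_le {b K σ u d R k l E : ℝ} (hb0 : 0 < b) (hb1 : b ≤ 1 / 64) (hK : 1 ≤ K)
    (hσ : 0 < σ) (hKσ : K * σ ≤ b ^ 2 / 200) (hσb : σ ≤ b ^ 2 / 200) (hσ1 : σ ≤ 1 / 100)
    (hd : 0 < d) (hR0 : 0 < R) (hL : 1 ≤ k * l) (h3 : d ≤ 2 * σ ^ 2 * R)
    (hu2 : u ^ 2 * (d * R) = k * l) (hE0 : 0 < E) (hE : E ≤ d ^ 2 / 2) :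
    (2 * (2 * u + K / R)) ^ 2 * E ≤ b ^ 2 / 64 * (k * l) := by
  have e1 : (2 * (2 * u + K / R)) ^ 2 ≤ 8 * (4 * u ^ 2 + (K / R) ^ 2) := by
    nlinarith [sq_nonneg (2 * u - K / R)]
  have e2 : u ^ 2 * d ^ 2 ≤ 2 * σ ^ 2 * (k * l) := by
    calc u ^ 2 * d ^ 2 = u ^ 2 * d * d := by ring
      _ ≤ u ^ 2 * d * (2 * σ ^ 2 * R) := by gcongr
      _ = 2 * σ ^ 2 * (u ^ 2 * (d * R)) := by ring
      _ = _ := by rw [hu2]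
  have e3 : K / R * d ≤ 2 * (K * σ) * σ := by
    rw [div_mul_eq_mul_div, div_le_iff₀ hR0]
    calc K * d ≤ K * (2 * σ ^ 2 * R) := by gcongr
      _ = _ := by ring
  have e4 : K / R * d ≤ b ^ 2 / 200 * (2 * σ) := by
    have : K * σ * (2 * σ) ≤ b ^ 2 / 200 * (2 * σ) := by gcongr
    linarith
  have e5 : (K / R * d) ^ 2 ≤ (b ^ 2 / 200 * (2 * σ)) ^ 2 :=
    pow_le_pow_left₀ (by positivity) e4 2
  have hb2 : b ^ 2 ≤ 1 / 4096 := by nlinarith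
  have hσ3 : σ ^ 2 ≤ b ^ 2 / 200 / 100 := by nlinarith
  calc (2 * (2 * u + K / R)) ^ 2 * E ≤ 8 * (4 * u ^ 2 + (K / R) ^ 2) * (d ^ 2 / 2) := by
        gcongr
    _ = 16 * (u ^ 2 * d ^ 2) + 4 * (K / R * d) ^ 2 := by ring
    _ ≤ 16 * (2 * σ ^ 2 * (k * l)) + 4 * (b ^ 2 / 200 * (2 * σ)) ^ 2 := by gcongr
    _ = 32 * (σ ^ 2 * (k * l)) + 16 / 200 ^ 2 * (b ^ 2 * (b ^ 2 * σ ^ 2)) := by ring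
    _ ≤ 32 * (b ^ 2 / 200 / 100 * (k * l)) + 16 / 200 ^ 2 * (b ^ 2 * (1 * 1)) := by
        have q1 : σ ^ 2 * (k * l) ≤ b ^ 2 / 200 / 100 * (k * l) :=
          mul_le_mul_of_nonneg_right hσ3 (by linarith)
        have q2 : b ^ 2 * (b ^ 2 * σ ^ 2) ≤ b ^ 2 * (1 * 1) := by
          gcongr <;> linarith
        linarith
    _ ≤ 32 * (b ^ 2 / 200 / 100 * (k * l)) + 16 / 200 ^ 2 * (b ^ 2 * (k * l)) := by
        have q3 : b ^ 2 * (1 * 1) ≤ b ^ 2 * (k * l) :=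
          mul_le_mul_of_nonneg_left (by linarith) (sq_nonneg b)
        linarith
    _ ≤ b ^ 2 / 64 * (k * l) := by
        have : 0 ≤ b ^ 2 * (k * l) := by positivity
        linarith

/-- With `S = ∑ θ i` the total count has mean at least `(S² - T S)/2`; the diagonal term `T S` and
`K` standard deviations are both negligible. -/
lemma vol_ge {S K σ T v : ℝ} (hS : 0 < S) (hσ1 : σ ≤ 1 / 100) (hK : 1 ≤ K)
    (hKσ : K * σ ≤ 1 / 100) (hT : T ≤ 1) (hSl : 1 ≤ σ * S)
    (hv : (S ^ 2 - T * S) / 2 - K * S ≤ v) : S ^ 2 / 4 ≤ v := by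
  have h3 : T * S ≤ 1 * S := by gcongr
  have h4 : K * S ≤ K * σ * S * S := by
    have : K * S * 1 ≤ K * S * (σ * S) := by gcongr
    linarith
  have h6 : K * σ * (S * S) ≤ 1 / 100 * (S * S) := by gcongr
  have h7 : S * 1 ≤ S * (σ * S) := by gcongr
  have h8 : σ * (S * S) ≤ 1 / 100 * (S * S) := by gcongr
  nlinarith

/-- If the relative fluctuation scale `u` of the crossing count of `D` is not small, then
`log(n/|D|)` is at least of order `nθ_min²`, and by the bound on `θ_max / θ_min` the threshold
`|D|² log⁴(n/|D|) / n` in `ê_τ(D)` exceeds `E₀[e(D)]`. -/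
lemma threshold_ge {b σ u d R k l E t T n r : ℝ} (hb0 : 0 < b) (hσ : 0 < σ)
    (hσb : σ ≤ b ^ 2 / 200) (hd : 0 < d) (hub : b / 8 < u) (hu2 : u ^ 2 * (d * R) = k * l)
    (hk0 : 0 < k) (hl : 2 ≤ l) (ht : 0 < t) (hn : 0 < n) (hr : 1 ≤ r) (hdk' : k * t ≤ d)
    (hdk : d ≤ k * T) (hR : n * t / 2 ≤ R) (h2 : r * T ^ 2 ≤ σ ^ 2 * n * t ^ 4)
    (hE : E ≤ d ^ 2 / 2) : E ≤ k ^ 2 / n * l ^ 4 := by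
  have hMk : k * t * (n * t / 2) ≤ d * R := by
    exact mul_le_mul hdk' hR (by positivity) hd.le
  have hub2 : (b / 8) ^ 2 ≤ u ^ 2 := pow_le_pow_left₀ (by positivity) hub.le 2
  have h3 : (b / 8) ^ 2 * (k * t * (n * t / 2)) ≤ k * l := by
    rw [← hu2]
    exact mul_le_mul hub2 hMk (by positivity) (by positivity)
  have h4 : b ^ 2 * (n * t ^ 2) ≤ 128 * l := by
    have : k * (b ^ 2 * (n * t ^ 2)) ≤ k * (128 * l) := by linarith
    exact le_of_mul_le_mul_left this hk0
  have h5 : n * T ^ 2 ≤ (σ * (n * t ^ 2)) ^ 2 := by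
    calc n * T ^ 2 ≤ n * (r * T ^ 2) := by
          gcongr; exact le_mul_of_one_le_left (by positivity) hr
      _ ≤ n * (σ ^ 2 * n * t ^ 4) := by gcongr
      _ = _ := by ring
  have h6 : σ * (n * t ^ 2) ≤ l := by
    have : σ * (n * t ^ 2) ≤ b ^ 2 / 200 * (n * t ^ 2) := by gcongr
    linarith
  have h7 : n * T ^ 2 ≤ l ^ 2 := h5.trans (pow_le_pow_left₀ (by positivity) h6 2)
  have h8 : l ^ 2 ≤ l ^ 4 := by
    have : 1 ≤ l ^ 2 := by nlinarith
    nlinarith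
  rw [div_mul_eq_mul_div, le_div_iff₀ hn]
  calc E * n ≤ ((k * T) ^ 2 / 2) * n := by
        gcongr
        refine hE.trans ?_
        gcongr
    _ = k ^ 2 * (n * T ^ 2) / 2 := by ring
    _ ≤ k ^ 2 * l ^ 4 / 2 := by
        gcongr; exact h7.trans h8
    _ ≤ _ := by have : 0 ≤ k ^ 2 * l ^ 4 := by positivity
                linarith

set_option maxHeartbeats 1000000 in
/-- On the event that the total count and the crossing count of `D` are not atypically small,
the thresholded estimator is at least `(1-c)² E₀[e(D)]` with `c` negligible. If
`log(n/|D|)` is small compared to `nθ_min²` this is due to concentration; otherwise the threshold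
in `ê_τ` already exceeds `E₀[e(D)]`. -/
lemma estCountTr_ge (H : Good r θ t T σ Λ) {p : Fin n → Fin n → ℝ}
    (hp : ∀ i j, p i j = θ i * θ j) {b K : ℝ} (hb0 : 0 < b) (hb1 : b ≤ 1 / 64) (hK : 1 ≤ K)
    (hKσ : K * σ ≤ b ^ 2 / 200) (hΛ2 : 2 ≤ Λ) {D : Finset (Fin n)}
    (hD : (r : ℝ) ^ ((1 : ℝ) / 3) ≤ D.card) (hDr : D.card ≤ r) {a : Config n}
    (hv1 : expCount n p Finset.univ - K * (∑ i, θ i) ≤ eCount n Finset.univ a)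
    (hv2 : eCount n Finset.univ a ≤ expCount n p Finset.univ + K * ∑ i, θ i)
    (hm : (∑ i ∈ D, θ i) * ((∑ i, θ i) - ∑ i ∈ D, θ i) -
      2 * √((D.card : ℝ) * Real.log ((n : ℝ) / D.card)) *
        √((∑ i ∈ D, θ i) * ((∑ i, θ i) - ∑ i ∈ D, θ i)) ≤ eCross n D a) :
    ∃ c : ℝ, 0 ≤ c ∧ c ≤ b ∧
      c ^ 2 * expCount n p D ≤ b ^ 2 / 64 * ((D.card : ℝ) * Real.log ((n : ℝ) / D.card)) ∧
      (1 - c) ^ 2 * expCount n p D ≤ estCountTr n D a := by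
  have hk1 := H.one_lt_card hD
  have hd := H.d_pos (zero_lt_one.trans hk1)
  have hS := H.S_pos
  have hdS := H.dS hDr
  have hSl := H.S_large
  have hE := H.expCount_le hp D
  have hE0 := H.expCount_pos hp hD
  have hEV := H.expCount_le hp Finset.univ
  have hEV' := H.expCount_ge hp Finset.univ
  have hl := H.log_ge hk1.le hDr
  have hσ := H.hσ
  have hσ1 := H.hσ1
  have hT1 := H.hT
  have ht := H.ht
  have htT := H.htT
  have hn := H.hn
  have hr1 := H.rpos
  have hdk := H.sum_le D
  have hdk' := H.sum_ge D
  have hSn := H.S_ge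
  have hnt := H.nt2
  have h2 := H.h2
  have hk : (1 : ℝ) < D.card := by exact_mod_cast hk1
  have hkr : (D.card : ℝ) ≤ r := by exact_mod_cast hDr
  set d := ∑ i ∈ D, θ i
  set S := ∑ i, θ i
  set k : ℝ := (D.card : ℝ)
  set l := Real.log ((n : ℝ) / k)
  set E := expCount n p D
  have hk0 : 0 < k := by linarith
  have hl2 : 2 ≤ l := hΛ2.trans hl
  have hL : 1 ≤ k * l := by nlinarith
  have hσ2 : σ ^ 2 ≤ 1 / 10000 := by nlinarith
  have hdS8 : d ≤ S / 8 := by nlinarith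
  set R := S - d
  have hR : S / 2 ≤ R := by simp only [R]; linarith
  have hR0 : 0 < R := by linarith
  set M := d * R
  have hM0 : 0 < M := mul_pos hd hR0
  have hLM : √(k * l) / √M ≤ b / 8 ∨ b / 8 < √(k * l) / √M := le_or_gt _ _
  set u := √(k * l) / √M with hu
  have hu0 : 0 ≤ u := by positivity
  have hu2 : u ^ 2 * M = k * l := by
    rw [hu, div_pow, Real.sq_sqrt (by positivity), Real.sq_sqrt hM0.le]; field_simp
  have hσb : σ ≤ b ^ 2 / 200 := by nlinarith
  have hdR : d ≤ 2 * σ ^ 2 * R := by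
    have : σ ^ 2 * (S / 2) ≤ σ ^ 2 * R := mul_le_mul_of_nonneg_left hR (sq_nonneg σ)
    linarith
  rcases hLM with hub | hub
  · refine ⟨2 * (2 * u + K / R), by positivity, ?_, ?_, ?_⟩
    · have h3 : K / R ≤ 2 * (K * σ) := by
        rw [div_le_iff₀ hR0]
        have : K * 1 ≤ K * (σ * S) := by gcongr
        have : K * σ * S ≤ K * σ * (2 * R) := by gcongr; linarith
        linarith
      have h4 : b ^ 2 ≤ b := by nlinarith
      linarith
    · exact err_le hb0 hb1 hK hσ hKσ hσb hσ1 hd hR0 hL hdR hu2 hE0 hE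
    · have hcle : 2 * (2 * u + K / R) ≤ 1 := by
        have h3 : K / R ≤ 2 * (K * σ) := by
          rw [div_le_iff₀ hR0]
          have : K * 1 ≤ K * (σ * S) := by gcongr
          have : K * σ * S ≤ K * σ * (2 * R) := by gcongr; linarith
          linarith
        have h4 : b ^ 2 ≤ b := by nlinarith
        linarith
      have h5 := estF_lower (v := eCount n Finset.univ a) (m := eCross n D a) (S := S) (d := d)
        (K := K) (u := u) hd hdS8 (by linarith) hu0 ?_ ?_ ?_ rfl hcle
      · refine le_trans ?_ (h5.trans (le_max_left _ _))
        rw [mul_div_assoc]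
        gcongr
      · -- the total count is at least `S²/2 - (K+1)S ≥ S²/4`
        exact vol_ge hS hσ1 hK (hKσ.trans (by nlinarith)) hT1 hSl (by linarith)
      · linarith
      · refine le_trans (le_of_eq ?_) hm
        have h3 : √(k * l) = u * √M := by rw [hu]; field_simp
        have h4 := Real.mul_self_sqrt hM0.le
        rw [h3]
        calc d * R * (1 - 2 * u) = M - 2 * u * M := by simp only [M]; ring
          _ = M - 2 * u * (√M * √M) := by rw [h4]
          _ = _ := by ring
  · refine ⟨0, le_rfl, hb0.le, by rw [sq, zero_mul, zero_mul]; positivity, ?_⟩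
    refine le_trans ?_ (le_max_right _ _)
    rw [sub_zero, one_pow, one_mul]
    change E ≤ k ^ 2 / (n : ℝ) * l ^ 4
    -- here `nθ_min²` is at most of order `log(n/|D|)`
    exact threshold_ge hb0 hσ hσb hd hub hu2 hk0 hl2 ht hn hr1 hdk' hdk (by linarith) h2 hE

end Good

lemma nullW_mem {n : ℕ} {p : Fin n → Fin n → ℝ} {θ : Fin n → ℝ}
    (hθ : ∀ i, θ i ∈ Set.Ioo (0 : ℝ) 1) (hp : ∀ i j, p i j = θ i * θ j) (e : Edge n) :
    0 ≤ nullW n p e ∧ nullW n p e ≤ 1 := by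
  rw [nullW, hp]
  have h1 := hθ e.1.1
  have h2 := hθ e.1.2
  exact ⟨mul_nonneg h1.1.le h2.1.le, by nlinarith [h1.1, h1.2, h2.1, h2.2]⟩

lemma scanStatU_eq (n : ℕ) (D : Finset (Fin n)) (a : Config n) :
    scanStatU n D a = scanG (eCount n D a) (estCountTr n D a) /
      ((D.card : ℝ) * Real.log ((n : ℝ) / D.card)) := rfl

lemma finite_scan_set (n r : ℕ) (a : Config n) :
    {x | ∃ D : Finset (Fin n),
        (r : ℝ) ^ ((1 : ℝ)/3) ≤ (D.card : ℝ) ∧ D.card ≤ r ∧ x = scanStatU n D a}.Finite := by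
  refine (Set.finite_range fun D : Finset (Fin n) => scanStatU n D a).subset ?_
  rintro x ⟨D, -, -, rfl⟩
  exact ⟨D, rfl⟩

lemma exists_card_eq {n r : ℕ} (h : r ≤ n) : ∃ C : Finset (Fin n), C.card = r := by
  obtain ⟨C, -, hC⟩ := Finset.exists_subset_card_eq
    (s := (Finset.univ : Finset (Fin n))) (n := r) (by simpa using h)
  exact ⟨C, hC⟩

lemma rpow_third_le {r : ℕ} (h : 1 ≤ r) : (r : ℝ) ^ ((1 : ℝ) / 3) ≤ r := by
  have h1 : (1 : ℝ) ≤ r := by exact_mod_cast h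
  calc (r : ℝ) ^ ((1 : ℝ) / 3) ≤ (r : ℝ) ^ (1 : ℝ) :=
        Real.rpow_le_rpow_of_exponent_le h1 (by norm_num)
    _ = r := Real.rpow_one _

lemma scanTestU_true {n r : ℕ} {ε : ℝ} {a : Config n} (hr : 1 ≤ r) (hrn : r ≤ n)
    (h : scanTestU n r ε a = true) : ∃ D : Finset (Fin n),
      (r : ℝ) ^ ((1 : ℝ)/3) ≤ (D.card : ℝ) ∧ D.card ≤ r ∧ 1 + ε / 3 ≤ scanStatU n D a := by
  rw [scanTestU] at h
  split_ifs at h with h1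
  obtain ⟨C, hC⟩ := exists_card_eq hrn
  have hne : {x | ∃ D : Finset (Fin n),
        (r : ℝ) ^ ((1 : ℝ)/3) ≤ (D.card : ℝ) ∧ D.card ≤ r ∧ x = scanStatU n D a}.Nonempty :=
    ⟨_, C, by rw [hC]; exact rpow_third_le hr, hC.le, rfl⟩
  obtain ⟨D, h2, h3, h4⟩ := hne.csSup_mem (finite_scan_set n r a)
  exact ⟨D, h2, h3, h4 ▸ h1⟩

lemma scanTestU_false {n r : ℕ} {ε : ℝ} {a : Config n}
    (h : scanTestU n r ε a = false) {D : Finset (Fin n)}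
    (hD : (r : ℝ) ^ ((1 : ℝ)/3) ≤ (D.card : ℝ)) (hDr : D.card ≤ r) :
    scanStatU n D a < 1 + ε / 3 := by
  rw [scanTestU] at h
  split_ifs at h with h1
  exact lt_of_le_of_lt (le_csSup (finite_scan_set n r a).bddAbove ⟨D, hD, hDr, rfl⟩)
    (not_le.1 h1)

/-- The test rejects only if the total count is atypical, or some `D` has an atypically small crossing
count, or the scan statistic of some `D` computed with the true mean is too large. The first event is
controlled by `K`, the other two by a union bound over all vertex sets. -/
lemma typeI {n r : ℕ} {θ : Fin n → ℝ} {t T σ Λ : ℝ} (H : Good r θ t T σ Λ)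
    {p : Fin n → Fin n → ℝ} (hθ : ∀ i, θ i ∈ Set.Ioo (0 : ℝ) 1)
    (hp : ∀ i j, p i j = θ i * θ j) {ε e1 K : ℝ} (he0 : 0 < e1) (he1 : e1 ≤ 1) (hεe : e1 ≤ ε)
    (hK : 1 ≤ K) (hKσ : K * σ ≤ (e1 / 64) ^ 2 / 200) (hΛ2 : 2 ≤ e1 / 6 * Λ) :
    prob n (nullW n p) {a | scanTestU n r ε a = true} ≤
      2 * Real.exp (-(K ^ 2 / 4)) + 4 * Real.exp (-(e1 / 6 * Λ - 1)) := by
  classical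
  have hw := nullW_mem hθ hp
  have hS := H.S_pos
  have hΛ1 := H.hΛ1
  have hΛ2' : 2 ≤ Λ := by nlinarith
  have hσ := H.hσ
  have hb0 : 0 < e1 / 64 := by positivity
  have hb1 : e1 / 64 ≤ 1 / 64 := by linarith
  set S := ∑ i, θ i with hSdef
  set I := (Finset.univ : Finset (Finset (Fin n))).filter
    fun D => (r : ℝ) ^ ((1 : ℝ) / 3) ≤ (D.card : ℝ) ∧ D.card ≤ r with hI
  set L : Finset (Fin n) → ℝ := fun D => (D.card : ℝ) * Real.log ((n : ℝ) / D.card) with hLdef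
  set M : Finset (Fin n) → ℝ := fun D => (∑ i ∈ D, θ i) * (S - ∑ i ∈ D, θ i) with hMdef
  set EV := ∑ e ∈ (Finset.univ : Finset (Edge n)), nullW n p e with hEV
  have hEV1 : EV = expCount n p Finset.univ := by rw [expCount_eq, inE_univ]
  have hEVS : EV ≤ S ^ 2 := by
    rw [hEV1]; have := H.expCount_le hp Finset.univ; nlinarith [sq_nonneg S]
  have hsS : √(S ^ 2) = S := Real.sqrt_sq hS.le
  have hLpos : ∀ D ∈ I, 0 < L D := by
    intro D hD
    have hD' := (Finset.mem_filter.1 hD).2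
    have h1 := H.one_lt_card hD'.1
    have h2 := H.log_ge h1.le hD'.2
    have h3 : (1 : ℝ) < D.card := by exact_mod_cast h1
    exact mul_pos (by linarith) (by linarith)
  have hMpos : ∀ D ∈ I, 0 < M D := by
    intro D hD
    have hD' := (Finset.mem_filter.1 hD).2
    have h1 := H.d_pos (zero_lt_one.trans (H.one_lt_card hD'.1))
    have h2 := H.dS hD'.2
    have h3 := H.hσ1
    have h4 : σ ^ 2 < 1 := by nlinarith
    refine mul_pos h1 ?_
    nlinarith
  -- exceptional events: total count too small (`A1`) or too large (`A2`), crossing count of `D` too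
  -- small (`B D`), oracle scan statistic of `D` too large (`G D`)
  set A1 : Set (Config n) := {a | cnt Finset.univ a ≤ EV - K * √(S ^ 2)} with hA1
  set A2 : Set (Config n) := {a | EV + K * √(S ^ 2) ≤ cnt Finset.univ a} with hA2
  set B : Finset (Fin n) → Set (Config n) := fun D =>
    {a | cnt (crossE n D) a ≤ (∑ e ∈ crossE n D, nullW n p e) - 2 * √(L D) * √(M D)} with hB
  set G : Finset (Fin n) → Set (Config n) := fun D =>
    {a | (1 + e1 / 6) * L D ≤ scanG (cnt (inE n D) a) (∑ e ∈ inE n D, nullW n p e)} with hG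
  have hsub : {a | scanTestU n r ε a = true} ⊆
      (A1 ∪ A2) ∪ ({a | ∃ D ∈ I, a ∈ B D} ∪ {a | ∃ D ∈ I, a ∈ G D}) := by
    intro a ha
    by_contra hcon
    simp only [Set.mem_union, not_or] at hcon
    obtain ⟨⟨h1, h2⟩, h3, h4⟩ := hcon
    obtain ⟨D, hD1, hD2, hD3⟩ := scanTestU_true H.hr.le H.hrn.le ha
    have hDI : D ∈ I := Finset.mem_filter.2 ⟨Finset.mem_univ _, hD1, hD2⟩
    have h3' : a ∉ B D := fun h => h3 ⟨D, hDI, h⟩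
    have h4' : a ∉ G D := fun h => h4 ⟨D, hDI, h⟩
    rw [hA1, Set.mem_ofPred_eq, not_le, hsS, hEV1] at h1
    rw [hA2, Set.mem_ofPred_eq, not_le, hsS, hEV1] at h2
    rw [hB, Set.mem_ofPred_eq, not_le, sum_cross_null hp] at h3'
    rw [hG, Set.mem_ofPred_eq, not_le, ← expCount_eq, ← eCount_eq_cnt] at h4'
    rw [← inE_univ, ← eCount_eq_cnt] at h1 h2
    rw [← eCross_eq_cnt] at h3'
    obtain ⟨c, hc0, hc1, hc2, hc3⟩ := H.estCountTr_ge hp hb0 hb1 hK hKσ hΛ2' hD1 hD2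
      h1.le h2.le h3'.le
    rw [scanStatU_eq, le_div_iff₀ (hLpos D hDI)] at hD3
    exact absurd (scan_transfer he0 he1 hεe hc0 hc1 (H.expCount_pos hp hD1) (hLpos D hDI)
      hc2 hc3 hD3) (not_le.2 h4')
  have hIsub : I ⊆ (Finset.univ : Finset (Finset (Fin n))).filter
      (fun D => 1 ≤ D.card ∧ D.card ≤ r) := by
    intro D hD
    have hD' := (Finset.mem_filter.1 hD).2
    exact Finset.mem_filter.2 ⟨Finset.mem_univ _, (H.one_lt_card hD'.1).le, hD'.2⟩
  have hsum : ∑ D ∈ I, Real.exp (-((1 + e1 / 6) * L D)) ≤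
      2 * Real.exp (-(e1 / 6 * Λ - 1)) := by
    refine (Finset.sum_le_sum_of_subset_of_nonneg hIsub
      (fun D _ _ => (Real.exp_pos _).le)).trans ?_
    exact sum_sets_le (r := r) (by exact_mod_cast H.hn) (by positivity)
      (fun k hk hkr => H.log_ge hk hkr) hΛ2
  have hB1 : ∑ D ∈ I, prob n (nullW n p) (B D) ≤ 2 * Real.exp (-(e1 / 6 * Λ - 1)) := by
    refine le_trans (Finset.sum_le_sum fun D hD => ?_) hsum
    refine (prob_lower hw (crossE n D) (K := 2 * √(L D)) (by positivity) (hMpos D hD)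
      (sum_cross_null hp D).le).trans (Real.exp_le_exp.2 ?_)
    rw [mul_pow, Real.sq_sqrt (hLpos D hD).le]
    have := hLpos D hD
    nlinarith
  have hG1 : ∑ D ∈ I, prob n (nullW n p) (G D) ≤ 2 * Real.exp (-(e1 / 6 * Λ - 1)) := by
    refine le_trans (Finset.sum_le_sum fun D hD => ?_) hsum
    refine prob_scanG_ge hw (inE n D) ?_ (mul_pos (by positivity) (hLpos D hD))
    rw [← expCount_eq]
    exact H.expCount_pos hp (Finset.mem_filter.1 hD).2.1
  have hKS : K ≤ 2 * √(S ^ 2) := by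
    rw [hsS]
    have h1 := H.S_large
    have h2 : K * σ ≤ 1 := by nlinarith
    have h3 : σ * K ≤ σ * S := by linarith
    have := le_of_mul_le_mul_left h3 hσ
    linarith
  have hp1 : prob n (nullW n p) A1 ≤ Real.exp (-(K ^ 2 / 4)) :=
    (prob_lower hw Finset.univ (by linarith) (by positivity) hEVS).trans
      (Real.exp_le_exp.2 (by nlinarith [sq_nonneg K]))
  have hp2 : prob n (nullW n p) A2 ≤ Real.exp (-(K ^ 2 / 4)) :=
    prob_upper hw Finset.univ (by linarith) (by positivity) hEVS hKS
  have q0 := prob_mono hw hsub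
  have q1 := prob_union hw (A1 ∪ A2) ({a | ∃ D ∈ I, a ∈ B D} ∪ {a | ∃ D ∈ I, a ∈ G D})
  have q2 := prob_union hw A1 A2
  have q3 := prob_union hw {a | ∃ D ∈ I, a ∈ B D} {a | ∃ D ∈ I, a ∈ G D}
  have q4 := prob_biUnion hw I B
  have q5 := prob_biUnion hw I G
  linarith

/-! ### The type II error -/

lemma le_mul_min {X q y : ℝ} (h1 : X ≤ q) (h2 : X ≤ q * y) : X ≤ q * min 1 y := by
  rcases min_choice 1 y with h | h <;> rw [h] <;> linarith

/-- If the total count and the crossing count of `D` deviate from `S²/2` and `d (S - d)` by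
relative errors of order `q * y`, then so does the estimator from `E₀[e(D)]`. -/
lemma est_upper {v m S d E K q y : ℝ} (hd : 0 < d) (hS : 0 < S) (hdS : d ≤ S / 100)
    (hq : q ≤ 1 / 100) (hy1 : y ≤ 1) (hqy : 0 ≤ q * y) (hq0 : 0 ≤ q)
    (hK : K ≤ q * y * S) (hm0 : 0 ≤ m) (hv : (S - 2 * K) ^ 2 / 2 ≤ v)
    (hm : m ≤ d * (S - d) + 3 * (q * y) * (d * S))
    (hE : d ^ 2 / 2 * (1 - q * y) ≤ E) : estF v m ≤ E * (1 + 28 * (q * y)) := by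
  have hqy1 : q * y ≤ 1 / 100 := by nlinarith
  set z := q * y with hz
  have hdS0 : 0 < d * S := mul_pos hd hS
  have h1 : m ≤ d * (1 + 8 * z) * (S - 2 * K - d * (1 + 8 * z)) := by
    have e1 : (1 + 8 * z) * (2 * K + d * (8 * z)) ≤ (1 + 8 / 100) * (2 * (z * S) + S / 100 * (8 * z)) := by
      have : 2 * K + d * (8 * z) ≤ 2 * (z * S) + S / 100 * (8 * z) := by
        have : d * (8 * z) ≤ S / 100 * (8 * z) := by gcongr
        linarith
      have h0 : 0 ≤ 2 * (z * S) + S / 100 * (8 * z) := by positivity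
      calc _ ≤ (1 + 8 * z) * (2 * (z * S) + S / 100 * (8 * z)) := by gcongr
        _ ≤ _ := by gcongr; linarith
    have e2 : 8 * z * d ≤ 8 * z * (S / 100) := by gcongr
    have e3 : S - d + 3 * z * S ≤ (1 + 8 * z) * (S - 2 * K - d * (1 + 8 * z)) := by
      have : 0 ≤ z * S := by positivity
      linarith
    have e4 := mul_le_mul_of_nonneg_left e3 hd.le
    linarith
  have h2 := estF_le (by positivity : 0 ≤ d * (1 + 8 * z)) hm0 hv h1
  have h3 : (d * (1 + 8 * z)) ^ 2 / 2 ≤ d ^ 2 / 2 * (1 - z) * (1 + 28 * z) := by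
    have : (1 + 8 * z) ^ 2 ≤ (1 - z) * (1 + 28 * z) := by nlinarith
    have := mul_le_mul_of_nonneg_left this (by positivity : 0 ≤ d ^ 2 / 2)
    linarith
  exact h2.trans (h3.trans (by gcongr))

/-- The observed count is large compared to the estimate `E * (1 + δ * min 1 (lam - 1))`. -/
lemma scan_of_le {ε δ E L μ x lam : ℝ} (hδ0 : 0 < δ) (hδ1 : δ ≤ 1 / 100)
    (hδε : 9 * δ * (1 + ε) ≤ ε) (hε : 0 < ε) (hE : 0 < E) (hL : 0 < L) (hlam : 1 < lam)
    (hμ0 : 0 < μ) (hμ : μ ≤ E * (1 + δ * min 1 (lam - 1)))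
    (hx : E * (1 + (1 - δ) * (lam - 1)) ≤ x) (hcond : (1 + ε) * L ≤ E * hFun (lam - 1)) :
    (1 + ε / 3) * L ≤ scanG x μ := by
  have hy1 : min 1 (lam - 1) ≤ 1 := min_le_left _ _
  have hy2 : min 1 (lam - 1) ≤ lam - 1 := min_le_right _ _
  have hy0 : 0 < min 1 (lam - 1) := lt_min one_pos (by linarith)
  set y := min 1 (lam - 1)
  set E' := E * (1 + δ * y) with hE'
  have hE'0 : 0 < E' := by positivity
  have hEE' : E ≤ E' := le_mul_of_one_le_right hE.le (by nlinarith)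
  have h1 : (1 - 3 * δ) * (lam - 1) ≤ max (E * (1 + (1 - δ) * (lam - 1)) / E' - 1) 0 := by
    refine le_trans ?_ (le_max_left _ _)
    rw [le_sub_iff_add_le, le_div_iff₀ hE'0, hE']
    have e1 : δ * y ≤ δ * (lam - 1) := by gcongr
    have e2 : (1 - 3 * δ) * (lam - 1) * (δ * y) ≤ (lam - 1) * (δ * 1) := by
      have : (1 - 3 * δ) * (lam - 1) ≤ lam - 1 := by nlinarith
      have h0 : 0 ≤ lam - 1 := by linarith
      gcongr
    have e3 : ((1 - 3 * δ) * (lam - 1) + 1) * (1 + δ * y) ≤ 1 + (1 - δ) * (lam - 1) := by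
      linarith
    have := mul_le_mul_of_nonneg_left e3 hE.le
    linarith
  have h2 : E * hFun ((1 - 3 * δ) * (lam - 1)) ≤ scanG (E * (1 + (1 - δ) * (lam - 1))) E' := by
    have h0 : 0 ≤ (1 - 3 * δ) * (lam - 1) := mul_nonneg (by linarith) (by linarith)
    rw [scanG]
    exact mul_le_mul hEE' (hFun_mono h0 h1) (hFun_nonneg h0) hE'0.le
  have h3 := hFun_mul_ge (c := 1 - 3 * δ) (x := lam - 1) (by linarith) (by linarith) (by linarith)
  have h4 : (1 - 3 * δ) ^ 2 * ((1 + ε) * L) ≤ E * hFun ((1 - 3 * δ) * (lam - 1)) := by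
    calc _ ≤ (1 - 3 * δ) ^ 2 * (E * hFun (lam - 1)) := by gcongr
      _ = E * ((1 - 3 * δ) ^ 2 * hFun (lam - 1)) := by ring
      _ ≤ _ := by gcongr
  have h5 : (1 + ε / 3) * L ≤ (1 - 3 * δ) ^ 2 * ((1 + ε) * L) := by
    have : 1 + ε / 3 ≤ (1 - 3 * δ) ^ 2 * (1 + ε) := by nlinarith
    have := mul_le_mul_of_nonneg_right this hL.le
    linarith
  calc _ ≤ _ := h5
    _ ≤ _ := h4
    _ ≤ _ := h2
    _ ≤ scanG x E' := scanG_mono_left hE'0 hx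
    _ ≤ scanG x μ := scanG_anti hμ0 hμ

/-- If the threshold `τ = k² ℓ⁴ / n` exceeds `E₀[e(D)]`, then the scan condition forces `λ_C` to be
nearly as large as `√(n/k)`, which dominates the powers of `ℓ = log (n/k)` lost in `τ`. -/
lemma scan_of_threshold {ε δ E x lam n k l t : ℝ} (hδ0 : 0 < δ) (hδ1 : δ ≤ 1 / 100)
    (hδε : 9 * δ * (1 + ε) ≤ ε) (hε : 0 < ε) (hE : 0 < E) (hk : 0 < k) (hn : 0 < n)
    (hl : 1 ≤ l) (hln : l = Real.log (n / k)) (hlΛ : 8 + 11 * Real.log l ≤ δ * l)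
    (hlam : 1 < lam) (hnt : 1 ≤ n * t ^ 2) (hEk : k ^ 2 * t ^ 2 / 4 ≤ E)
    (hτ : E ≤ k ^ 2 / n * l ^ 4)
    (hx : E * (1 + (1 - δ) * (lam - 1)) ≤ x)
    (hcond : (1 + ε) * (k * l) ≤ E * hFun (lam - 1)) :
    (1 + ε / 3) * (k * l) ≤ scanG x (k ^ 2 / n * l ^ 4) := by
  have hl0 : 0 < l := by linarith
  have hL : 0 < k * l := by positivity
  have hlogl : 0 ≤ Real.log l := Real.log_nonneg hl
  have hlam0 : 0 < lam := by linarith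
  have hloglam : 0 ≤ Real.log lam := Real.log_nonneg hlam.le
  set τ := k ^ 2 / n * l ^ 4 with hτdef
  have hτ0 : 0 < τ := by positivity
  have h1 : hFun (lam - 1) ≤ lam * Real.log lam := by
    rw [hFun]
    have : lam - 1 + 1 = lam := by ring
    rw [this]; linarith
  -- the scan condition gives `lam ^ 2 ≥ exp ℓ / ℓ ^ 3`
  have h2 : l - 3 * Real.log l ≤ 2 * Real.log lam := by
    have e1 : k * l ≤ τ * (lam * lam) := by
      calc k * l ≤ (1 + ε) * (k * l) := le_mul_of_one_le_left hL.le (by linarith)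
        _ ≤ E * hFun (lam - 1) := hcond
        _ ≤ E * (lam * Real.log lam) := by gcongr
        _ ≤ τ * (lam * lam) := by
          have := Real.log_le_self hlam0.le
          gcongr
    have e2 : n / k ≤ l ^ 3 * lam ^ 2 := by
      rw [div_le_iff₀ hk]
      have e3 : n * (k * l) ≤ n * (τ * (lam * lam)) := by gcongr
      have e4 : n * (τ * (lam * lam)) = (k * l) * (l ^ 3 * lam ^ 2 * k) := by
        rw [hτdef]; field_simp
      rw [e4, mul_comm n] at e3
      exact le_of_mul_le_mul_left e3 hL
    have e5 := Real.log_le_log (by positivity) e2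
    rw [← hln, Real.log_mul (by positivity) (by positivity), Real.log_pow, Real.log_pow] at e5
    push_cast at e5
    linarith
  have h3 : Real.log (τ / E) ≤ 2 + 4 * Real.log l := by
    have e1 : τ / E ≤ 4 * l ^ 4 := by
      rw [div_le_iff₀ hE, hτdef, div_mul_eq_mul_div, div_le_iff₀ hn]
      have : k ^ 2 * l ^ 4 * 1 ≤ k ^ 2 * l ^ 4 * (n * t ^ 2) := by gcongr
      have := mul_le_mul_of_nonneg_left hEk (by positivity : 0 ≤ 4 * l ^ 4 * n)
      linarith
    have e2 := Real.log_le_log (by positivity) e1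
    rw [Real.log_mul (by norm_num) (by positivity), Real.log_pow] at e2
    have e3 : Real.log 4 ≤ 2 := by
      have : (4 : ℝ) = 2 ^ 2 := by norm_num
      rw [this, Real.log_pow]
      have := Real.log_two_lt_d9
      push_cast; linarith
    push_cast at e2
    linarith
  have hx' : (1 - δ) * (lam * E) ≤ x := by
    have : 0 ≤ δ * E := by positivity
    linarith
  have hx0 : 0 < (1 - δ) * (lam * E) := mul_pos (by linarith) (by positivity)
  have hxpos : 0 < x := hx0.trans_le hx'
  have h4 : (1 - δ) * Real.log lam ≤ Real.log (x / τ) - 1 := by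
    have e1 : (1 - δ) * (lam * E) / τ ≤ x / τ := by gcongr
    have e2 := Real.log_le_log (by positivity) e1
    have e3 : (1 - δ) * (lam * E) / τ = (1 - δ) * lam / (τ / E) := by field_simp
    have e4 : (1 - δ) * lam ≠ 0 := (mul_pos (by linarith) hlam0).ne'
    rw [e3, Real.log_div e4 (by positivity), Real.log_mul (by linarith) hlam0.ne'] at e2
    have e5 : -1 ≤ Real.log (1 - δ) := by
      have := Real.one_sub_inv_le_log_of_pos (by linarith : 0 < 1 - δ)
      have h6 : (1 - δ)⁻¹ ≤ 2 := by
        rw [inv_le_comm₀ (by linarith) (by norm_num)]; linarith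
      linarith
    have e6 : δ * (l - 3 * Real.log l) ≤ δ * (2 * Real.log lam) := by gcongr
    have e7 : δ * Real.log l ≤ 1 * Real.log l := by gcongr; linarith
    linarith
  have h5 : 0 ≤ (1 - δ) * Real.log lam := mul_nonneg (by linarith) hloglam
  have hτx : τ ≤ x := by
    by_contra hcon
    have : x / τ ≤ 1 := (div_le_one hτ0).2 (not_le.1 hcon).le
    have := Real.log_nonpos (by positivity) this
    linarith
  rw [scanG_eq hτ0 hτx]
  calc (1 + ε / 3) * (k * l) ≤ (1 - δ) ^ 2 * ((1 + ε) * (k * l)) := by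
        have : 1 + ε / 3 ≤ (1 - δ) ^ 2 * (1 + ε) := by nlinarith
        have := mul_le_mul_of_nonneg_right this hL.le
        linarith
    _ ≤ (1 - δ) ^ 2 * (E * (lam * Real.log lam)) := by
        exact mul_le_mul_of_nonneg_left (hcond.trans (by gcongr)) (sq_nonneg _)
    _ = ((1 - δ) * (lam * E)) * ((1 - δ) * Real.log lam) := by ring
    _ ≤ x * (Real.log (x / τ) - 1) := by gcongr
    _ ≤ _ := by linarith

namespace Good

variable {n r : ℕ} {θ : Fin n → ℝ} {t T σ Λ : ℝ}

/-- A maximizer `D ⊆ C` of the objective is not too small: the bound on `θ_max / θ_min` makes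
subsets with fewer than `r ^ (1/3)` vertices less informative than `C` itself. -/
lemma card_ge (H : Good r θ t T σ Λ) {p : Fin n → Fin n → ℝ}
    (hp : ∀ i j, p i j = θ i * θ j) {C D : Finset (Fin n)} (hC : C.card = r) (hDC : D ⊆ C)
    (hD : D.Nonempty) (hmax : objective n p C ≤ objective n p D) :
    (r : ℝ) ^ ((1 : ℝ) / 3) ≤ D.card := by
  have hk1 : 1 ≤ D.card := Finset.card_pos.2 hD
  have hkr : D.card ≤ r := hC ▸ Finset.card_le_card hDC
  have hr1 := H.rpos
  have hr0 : (0 : ℝ) < r := by linarith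
  have hCr : (r : ℝ) ^ ((1 : ℝ) / 3) ≤ C.card := by
    rw [hC]; exact rpow_third_le H.hr.le
  have hlr := H.log_ge H.hr.le le_rfl
  have hlk := H.log_ge hk1 hkr
  have hΛ1 := H.hΛ1
  have ht := H.ht
  have hT := ht.trans_le H.htT
  have hn := H.hn
  have hk0 : (0 : ℝ) < D.card := by exact_mod_cast hk1
  have hkr' : (D.card : ℝ) ≤ r := by exact_mod_cast hkr
  have hll : Real.log ((n : ℝ) / r) ≤ Real.log ((n : ℝ) / D.card) :=
    Real.log_le_log (by positivity) (by gcongr)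
  have hTc := H.T_le hCr
  have hc := H.sum_ge C
  have hd := H.sum_le D
  have hd0 := H.d_pos hk1
  have hEC := H.expCount_ge hp C
  have hED := H.expCount_le hp D
  rw [objective, objective, hC] at hmax
  rw [hC] at hc
  set k : ℝ := (D.card : ℝ)
  set lr := Real.log ((n : ℝ) / r)
  set lk := Real.log ((n : ℝ) / k)
  set c := ∑ i ∈ C, θ i
  set d := ∑ i ∈ D, θ i
  have hlr0 : 0 < lr := by linarith
  have hlk0 : 0 < lk := by linarith
  have e1 : (49 / 100 : ℝ) * (r * t) ^ 2 ≤ expCount n p C := by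
    have hrt : 0 < r * t := by positivity
    have e2 : T * c ≤ σ * c * c := mul_le_mul_of_nonneg_right hTc (by linarith)
    have e3 : (r * t) ^ 2 ≤ c ^ 2 := pow_le_pow_left₀ hrt.le hc 2
    have e4 : σ * (c * c) ≤ 1 / 100 * (c * c) :=
      mul_le_mul_of_nonneg_right H.hσ1 (mul_self_nonneg c)
    have e5 := sq_nonneg c
    linarith
  have e2 : expCount n p D ≤ (k * T) ^ 2 / 2 := by
    refine hED.trans ?_
    gcongr
  have e3 : (49 / 100 : ℝ) * (r * t) ^ 2 / (r * lr) ≤ (k * T) ^ 2 / 2 / (k * lk) :=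
    (div_le_div_of_nonneg_right e1 (by positivity)).trans
      (hmax.trans (div_le_div_of_nonneg_right e2 (by positivity)))
  have e4 : (49 / 100 : ℝ) * r * t ^ 2 ≤ k * T ^ 2 / 2 := by
    have q1 : (49 / 100 : ℝ) * (r * t) ^ 2 / (r * lr) = (49 / 100 : ℝ) * r * t ^ 2 / lr := by
      field_simp
    have q2 : (k * T) ^ 2 / 2 / (k * lk) = k * T ^ 2 / 2 / lk := by field_simp
    rw [q1, q2] at e3
    have q3 : k * T ^ 2 / 2 / lk ≤ k * T ^ 2 / 2 / lr := by gcongr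
    have q4 := e3.trans q3
    rwa [div_le_div_iff_of_pos_right hlr0] at q4
  have h1 := H.h1
  have e5 : k * T ^ 2 / 2 ≤ k * (σ ^ 2 * t ^ 2 * (r : ℝ) ^ ((2 : ℝ) / 3)) / 2 := by gcongr
  have e6 : (r : ℝ) = (r : ℝ) ^ ((2 : ℝ) / 3) * (r : ℝ) ^ ((1 : ℝ) / 3) := by
    rw [← Real.rpow_add hr0]; norm_num
  have hs0 : 0 < (r : ℝ) ^ ((2 : ℝ) / 3) := by positivity
  set s := (r : ℝ) ^ ((2 : ℝ) / 3)
  set w := (r : ℝ) ^ ((1 : ℝ) / 3)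
  have e7 : (t ^ 2 * s) * (49 / 100 * w) ≤ (t ^ 2 * s) * (k * σ ^ 2 / 2) := by
    have : (49 / 100 : ℝ) * t ^ 2 * r = (49 / 100 : ℝ) * t ^ 2 * (s * w) :=
      congrArg _ e6
    linarith
  have e8 := le_of_mul_le_mul_left e7 (by positivity)
  have e9 : k * σ ^ 2 ≤ k * (1 / 10000) := by
    have h0 := pow_le_pow_left₀ H.hσ.le H.hσ1 2
    exact mul_le_mul_of_nonneg_left (h0.trans (by norm_num)) hk0.le
  linarith

/-- Quantities attached to a community `C`, its most informative subset `D`, and the scaling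
`lam`, together with the bounds used in the analysis of the alternative. -/
lemma alt_facts (H : Good r θ t T σ Λ) {p : Fin n → Fin n → ℝ}
    (hp : ∀ i j, p i j = θ i * θ j) {C D : Finset (Fin n)} (hC : C.card = r) (hDC : D ⊆ C)
    (hD : (r : ℝ) ^ ((1 : ℝ) / 3) ≤ D.card) {lam ε q : ℝ} (hε : 0 < ε) (hlam : 1 ≤ lam)
    (hlamp : ∀ i ∈ C, ∀ j ∈ C, lam * p i j ≤ 1) (hσq : σ ≤ q) (hqΛ : 1 ≤ q ^ 2 * Λ)
    (hcond : (1 + ε) * ((D.card : ℝ) * Real.log ((n : ℝ) / D.card)) ≤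
      expCount n p D * hFun (lam - 1)) :
    1 < lam ∧
    2 * Λ ≤ expCount n p D * (lam - 1) ^ 2 ∧
    lam * (∑ i ∈ C, θ i) ≤ σ ^ 2 * (∑ i, θ i) ∧
    (∑ i ∈ D, θ i) ^ 2 / 2 * (1 - q * min 1 (lam - 1)) ≤ expCount n p D ∧
    1 ≤ σ ^ 2 * ((∑ i ∈ D, θ i) * ∑ i, θ i) ∧
    2 ≤ (lam - 1) * ∑ i ∈ D, θ i := by
  have hk1 := H.one_lt_card hD
  have hDr : D.card ≤ r := hC ▸ Finset.card_le_card hDC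
  have hl := H.log_ge hk1.le hDr
  have hΛ1 := H.hΛ1
  have ht := H.ht
  have hT := H.hT
  have hn := H.hn
  have hk : (1 : ℝ) < D.card := by exact_mod_cast hk1
  have hd0 := H.d_pos (zero_lt_one.trans hk1)
  have hE0 := H.expCount_pos hp hD
  have hE1 := H.expCount_le hp D
  have hE2 := H.expCount_ge hp D
  have hTd := H.T_le hD
  have hdk := H.sum_ge D
  have hSn := H.S_ge
  have hS := H.S_pos
  have hnt := H.nt2
  have hr1 := H.rpos
  have hσ := H.hσ
  set d := ∑ i ∈ D, θ i
  set S := ∑ i, θ i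
  set E := expCount n p D
  have hΛL : Λ ≤ (D.card : ℝ) * Real.log ((n : ℝ) / D.card) := by nlinarith
  have hsq : 2 * Λ ≤ E * (lam - 1) ^ 2 := by
    have h1 := mul_le_mul_of_nonneg_left (hFun_le_sq (x := lam - 1) (by linarith)) hE0.le
    nlinarith
  have hlam1 : 1 < lam := by
    rcases hlam.lt_or_eq with h | h
    · exact h
    · rw [← h] at hsq; simp at hsq; linarith
  have hsqd : 4 * Λ ≤ ((lam - 1) * d) ^ 2 := by
    have : E * (lam - 1) ^ 2 ≤ d ^ 2 / 2 * (lam - 1) ^ 2 := by gcongr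
    linarith
  have hld : 0 < (lam - 1) * d := mul_pos (by linarith) hd0
  have hq0 : 0 < q := hσ.trans_le hσq
  refine ⟨hlam1, hsq, ?_, ?_, ?_, ?_⟩
  · have h1 : ∀ i ∈ C, lam * θ i ≤ 1 / t := by
      intro i hi
      rw [le_div_iff₀ ht]
      have h2 := hlamp i hi i hi
      rw [hp] at h2
      have h3 := H.hle i
      have h4 := H.θpos i
      calc lam * θ i * t ≤ lam * θ i * θ i := by gcongr
        _ ≤ 1 := by linarith
    have h2 : lam * ∑ i ∈ C, θ i ≤ r * (1 / t) := by
      rw [Finset.mul_sum, ← hC, ← nsmul_eq_mul]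
      exact Finset.sum_le_card_nsmul _ _ _ h1
    have h3 : r * (1 / t) ≤ σ ^ 2 * (n * t) := by
      rw [mul_one_div, div_le_iff₀ ht]
      linarith
    exact h2.trans (h3.trans (by gcongr))
  · have hy : T / d ≤ q * min 1 (lam - 1) := by
      refine le_mul_min ((div_le_iff₀ hd0).2 (hTd.trans (by gcongr))) ?_
      rw [div_le_iff₀ hd0]
      have h1 : (1 : ℝ) ≤ (q * ((lam - 1) * d)) ^ 2 := by
        have := mul_le_mul_of_nonneg_left hsqd (sq_nonneg q)
        rw [mul_pow]; linarith
      have h2 : 1 ≤ q * ((lam - 1) * d) := by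
        by_contra hcon
        rw [not_le] at hcon
        have : 0 < q * ((lam - 1) * d) := mul_pos hq0 hld
        nlinarith
      linarith
    have h1 : T ≤ q * min 1 (lam - 1) * d := (div_le_iff₀ hd0).1 hy
    have h2 := mul_le_mul_of_nonneg_right h1 hd0.le
    linarith
  · have h1 : 1 * t ≤ d := le_trans (by gcongr) hdk
    have h2 : 1 * t * (n * t) ≤ d * S := mul_le_mul h1 hSn (by positivity) hd0.le
    have h3 := mul_le_mul_of_nonneg_left h2 (sq_nonneg σ)
    linarith
  · by_contra hcon
    rw [not_le] at hcon
    nlinarith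

end Good

/-- A deviation of `K` standard deviations of the internal count of `D` is negligible compared to
`(lam - 1) * E`, since both `(lam - 1)² E` and `lam * E` are large. -/
lemma count_ge {lam E K q Λ x : ℝ} (hq0 : 0 < q) (hlam1 : 1 < lam) (hK : 0 ≤ K) (hE0 : 0 < E)
    (hqΛ : K ^ 2 ≤ q ^ 2 * Λ) (hsq : 2 * Λ ≤ E * (lam - 1) ^ 2)
    (hlamE : 4 * K ^ 2 ≤ q ^ 2 * (lam * E)) (hx : lam * E - K * √(lam * E) ≤ x) :
    E * (1 + (1 - 28 * q) * (lam - 1)) ≤ x := by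
  have hlam10 : 0 < lam - 1 := by linarith
  have hlE : 0 < lam * E := mul_pos (by linarith) hE0
  have h1 : K * √(lam * E) ≤ 28 * q * (lam - 1) * E := by
    refine (pow_le_pow_iff_left₀ (by positivity) (by positivity) two_ne_zero).1 ?_
    rw [mul_pow, Real.sq_sqrt hlE.le]
    have h2 : K ^ 2 * lam ≤ q ^ 2 * (E * (lam - 1) ^ 2) := by
      rcases le_total lam 2 with h | h
      · have h0 : 0 ≤ q ^ 2 * Λ := (sq_nonneg K).trans hqΛ
        calc K ^ 2 * lam ≤ q ^ 2 * Λ * 2 := by gcongr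
          _ = q ^ 2 * (2 * Λ) := by ring
          _ ≤ _ := by gcongr
      · have h3 : lam ^ 2 / 4 ≤ (lam - 1) ^ 2 := by nlinarith
        have h4 := mul_le_mul_of_nonneg_right hlamE (by linarith : 0 ≤ lam / 4)
        have h5 := mul_le_mul_of_nonneg_left h3 (by positivity : 0 ≤ q ^ 2 * E)
        linarith
    have h3 := mul_le_mul_of_nonneg_right h2 hE0.le
    have h4 : 0 ≤ q ^ 2 * (lam - 1) ^ 2 * E ^ 2 := by positivity
    calc K ^ 2 * (lam * E) = K ^ 2 * lam * E := by ring
      _ ≤ _ := h3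
      _ = q ^ 2 * (lam - 1) ^ 2 * E ^ 2 := by ring
      _ ≤ 28 ^ 2 * (q ^ 2 * (lam - 1) ^ 2 * E ^ 2) := by linarith
      _ = _ := by ring
  linarith

namespace Good

variable {n r : ℕ} {θ : Fin n → ℝ} {t T σ Λ : ℝ}

set_option maxHeartbeats 800000 in
/-- On the event that the total, crossing and internal counts are typical under `P_C`, the scan
statistic of the most informative subset `D` exceeds the critical value. -/
lemma scanStatU_ge (H : Good r θ t T σ Λ) {p : Fin n → Fin n → ℝ}
    (hp : ∀ i j, p i j = θ i * θ j) {C D : Finset (Fin n)} (hC : C.card = r) (hDC : D ⊆ C)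
    (hD : (r : ℝ) ^ ((1 : ℝ) / 3) ≤ D.card) {lam ε q K : ℝ} (hε : 0 < ε) (hlam : 1 ≤ lam)
    (hlamp : ∀ i ∈ C, ∀ j ∈ C, lam * p i j ≤ 1) (hq : q ≤ 1 / 2800)
    (hqε : 9 * (28 * q) * (1 + ε) ≤ ε) (hK : 1 ≤ K) (hKσ : K * σ ≤ q)
    (hqΛ : K ^ 2 ≤ q ^ 2 * Λ)
    (hlog : ∀ l, Λ ≤ l → 8 + 11 * Real.log l ≤ 28 * q * l)
    (hlamE : 4 * K ^ 2 ≤ q ^ 2 * (lam * expCount n p D))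
    (hcond : (1 + ε) * ((D.card : ℝ) * Real.log ((n : ℝ) / D.card)) ≤
      expCount n p D * hFun (lam - 1)) {a : Config n}
    (hv : (∑ e, altW n p lam C e) - K * (∑ i, θ i) ≤ eCount n Finset.univ a)
    (hm : eCross n D a ≤ (∑ e ∈ crossE n D, altW n p lam C e) +
      K * (2 * √((∑ i ∈ D, θ i) * ∑ i, θ i)))
    (hx : lam * expCount n p D - K * √(lam * expCount n p D) ≤ eCount n D a) :
    1 + ε / 3 ≤ scanStatU n D a := by
  have hk1 := H.one_lt_card hD
  have hDr : D.card ≤ r := hC ▸ Finset.card_le_card hDC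
  have hl := H.log_ge hk1.le hDr
  have hΛ1 := H.hΛ1
  have hσ := H.hσ
  have hσ1 := H.hσ1
  have hσK : σ ≤ K * σ := le_mul_of_one_le_left hσ.le hK
  have hσq : σ ≤ q := hσK.trans hKσ
  have hq0 : 0 < q := hσ.trans_le hσq
  have hK2 : 1 ≤ K ^ 2 := one_le_pow₀ hK
  obtain ⟨hlam1, hsq, hlc, hEd, hw1, hld⟩ := H.alt_facts hp hC hDC hD hε hlam hlamp hσq
    (hK2.trans hqΛ) hcond
  have ht := H.ht
  have hn := H.hn
  have hT := H.hT
  have hk : (1 : ℝ) < D.card := by exact_mod_cast hk1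
  have hd0 := H.d_pos (zero_lt_one.trans hk1)
  have hE0 := H.expCount_pos hp hD
  have hdk := H.sum_ge D
  have hS := H.S_pos
  have hSl := H.S_large
  have hdS := H.dS hDr
  have hcS := H.dS hC.le
  have hnt := H.nt2
  have hr1 := H.rpos
  have hEV := H.expCount_ge hp Finset.univ
  have hEC : 0 ≤ expCount n p C := by
    refine (H.expCount_pos hp ?_).le
    rw [hC]; exact rpow_third_le H.hr.le
  rw [sum_univ_alt] at hv
  rw [sum_cross_alt hp lam hDC] at hm
  rw [scanStatU_eq, estCountTr]
  have hm0 : 0 ≤ eCross n D a := by rw [eCross_eq_cnt]; exact cnt_nonneg _ _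
  have hσ2 : σ ^ 2 ≤ 1 / 100 * σ := by
    rw [sq]; exact mul_le_mul_of_nonneg_right hσ1 hσ.le
  have hσ3 : 0 < σ ^ 2 := by positivity
  set d := ∑ i ∈ D, θ i
  set S := ∑ i, θ i
  set c := ∑ i ∈ C, θ i
  set E := expCount n p D
  set k : ℝ := (D.card : ℝ)
  set l := Real.log ((n : ℝ) / k) with hldef
  set y := min 1 (lam - 1) with hy
  set x := eCount n D a
  set m := eCross n D a
  set v := eCount n Finset.univ a
  have hk0 : 0 < k := by linarith
  have hl1 : 1 ≤ l := hΛ1.trans hl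
  have hL0 : 0 < k * l := by positivity
  have hy0 : 0 < y := lt_min one_pos (by linarith)
  have hy1 : y ≤ 1 := min_le_left _ _
  have hlam10 : 0 < lam - 1 := by linarith
  -- errors relative to `y` of the total count
  have hKS : K ≤ q * y * S := by
    have h1 : K / S ≤ q * y := by
      refine le_mul_min ?_ ?_
      · rw [div_le_iff₀ hS]
        calc K = K * 1 := (mul_one K).symm
          _ ≤ K * (σ * S) := by gcongr
          _ = K * σ * S := by ring
          _ ≤ q * S := by gcongr
      · rw [div_le_iff₀ hS]
        calc K = K * 1 := (mul_one K).symm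
          _ ≤ K * ((lam - 1) * d) := by gcongr; linarith
          _ ≤ K * ((lam - 1) * (σ * S)) := by
            have : d ≤ σ * S := hdS.trans (by gcongr; linarith)
            gcongr
          _ = K * σ * ((lam - 1) * S) := by ring
          _ ≤ q * ((lam - 1) * S) := by gcongr
          _ = _ := by ring
    exact (div_le_iff₀ hS).1 h1
  have hv' : (S - 2 * K) ^ 2 / 2 ≤ v := by
    have h1 : 0 ≤ (lam - 1) * expCount n p C := mul_nonneg hlam10.le hEC
    have h2 : T * S ≤ 1 * S := by gcongr
    have h3 : K ≤ S / 100 := by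
      have : q * y ≤ 1 / 100 * 1 := by gcongr; linarith
      have := mul_le_mul_of_nonneg_right this hS.le
      linarith
    have h4 : K * K ≤ K * (S / 100) := by gcongr
    have h5 : 1 * S ≤ K * S := by gcongr
    linarith
  set w := √(d * S)
  have hdS0 : 0 < d * S := mul_pos hd0 hS
  have hw2 : w ^ 2 = d * S := Real.sq_sqrt hdS0.le
  have hw0 : 0 < w := Real.sqrt_pos.2 hdS0
  have hσw : 1 ≤ σ * w := by
    have : (1 : ℝ) ^ 2 ≤ (σ * w) ^ 2 := by rw [mul_pow, hw2]; linarith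
    exact (pow_le_pow_iff_left₀ zero_le_one (by positivity) two_ne_zero).1 this
  have hdw : d ≤ σ * w := by
    have : d ^ 2 ≤ (σ * w) ^ 2 := by
      rw [mul_pow, hw2]
      have := mul_le_mul_of_nonneg_left hdS hd0.le
      linarith
    exact (pow_le_pow_iff_left₀ hd0.le (by positivity) two_ne_zero).1 this
  have hKw : K ≤ q * y * w := by
    have h1 : K / w ≤ q * y := by
      refine le_mul_min ?_ ?_
      · rw [div_le_iff₀ hw0]
        calc K = K * 1 := (mul_one K).symm
          _ ≤ K * (σ * w) := by gcongr
          _ = K * σ * w := by ring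
          _ ≤ q * w := by gcongr
      · rw [div_le_iff₀ hw0]
        calc K = K * 1 := (mul_one K).symm
          _ ≤ K * ((lam - 1) * d) := by gcongr; linarith
          _ ≤ K * ((lam - 1) * (σ * w)) := by gcongr
          _ = K * σ * ((lam - 1) * w) := by ring
          _ ≤ q * ((lam - 1) * w) := by gcongr
          _ = _ := by ring
    exact (div_le_iff₀ hw0).1 h1
  have hc0 : 0 ≤ c := Finset.sum_nonneg fun i _ => (H.θpos i).le
  have hlc' : (lam - 1) * c ≤ q * y * S := by
    have h1 : (lam - 1) * c / S ≤ q * y := by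
      have hσ4 : σ ^ 2 * S ≤ q * S := by gcongr; linarith
      refine le_mul_min ?_ ?_
      · rw [div_le_iff₀ hS]; linarith
      · rw [div_le_iff₀ hS]
        calc (lam - 1) * c ≤ (lam - 1) * (q * S) := by gcongr; linarith
          _ = _ := by ring
    exact (div_le_iff₀ hS).1 h1
  have hm' : m ≤ d * (S - d) + 3 * (q * y) * (d * S) := by
    have h1 : K * (2 * w) ≤ q * y * w * (2 * w) := by gcongr
    have h2 : d * ((lam - 1) * c) ≤ d * (q * y * S) := by gcongr
    have h3 : 0 ≤ (lam - 1) * d ^ 2 := by positivity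
    have h4 : q * y * w * (2 * w) = 2 * (q * y) * (d * S) := by rw [← hw2]; ring
    linarith
  have hest : estCount n D a ≤ E * (1 + 28 * (q * y)) := by
    refine est_upper (K := K) hd0 hS ?_ (by linarith) hy1 (by positivity) hq0.le hKS hm0 hv' hm'
      hEd
    have : σ ^ 2 * S ≤ 1 / 100 * S := by gcongr; linarith
    linarith
  -- the fluctuation of the internal count is negligible compared to `(lam - 1) * E`
  have hx' : E * (1 + (1 - 28 * q) * (lam - 1)) ≤ x :=
    count_ge hq0 hlam1 (by linarith) hE0 hqΛ hsq hlamE hx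
  rw [le_div_iff₀ hL0]
  have hτ0 : 0 < k ^ 2 / (n : ℝ) * l ^ 4 := by positivity
  rcases le_or_gt (k ^ 2 / (n : ℝ) * l ^ 4) (E * (1 + 28 * (q * y))) with hτ | hτ
  · refine scan_of_le (by positivity : 0 < 28 * q) (by linarith) hqε hε hE0 hL0 hlam1
      (lt_max_of_lt_right hτ0) ?_ hx' hcond
    rw [mul_assoc]
    exact max_le hest hτ
  · rw [max_eq_right (hest.trans hτ.le)]
    refine scan_of_threshold (t := t) (by positivity : 0 < 28 * q) (by linarith) hqε hε hE0 hk0 hn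
      hl1 hldef (hlog l hl) hlam1 ?_ ?_ ?_ hx' hcond
    · have : σ ^ 2 * (n * t ^ 2) ≤ 1 * (n * t ^ 2) := by gcongr; linarith
      linarith
    · have h1 : (k * t) ^ 2 ≤ d ^ 2 := pow_le_pow_left₀ (by positivity) hdk 2
      have h2 : q * y ≤ 1 / 2 * 1 := by gcongr; linarith
      have h3 := mul_le_mul_of_nonneg_left h2 (sq_nonneg d)
      linarith
    · have : 0 ≤ E * (28 * (q * y)) := by positivity
      linarith

end Good

lemma altW_mem {n : ℕ} {p : Fin n → Fin n → ℝ} {θ : Fin n → ℝ}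
    (hθ : ∀ i, θ i ∈ Set.Ioo (0 : ℝ) 1) (hp : ∀ i j, p i j = θ i * θ j)
    {C : Finset (Fin n)} {lam : ℝ} (hlam : 1 ≤ lam)
    (hlamp : ∀ i ∈ C, ∀ j ∈ C, lam * p i j ≤ 1) (e : Edge n) :
    0 ≤ altW n p lam C e ∧ altW n p lam C e ≤ 1 := by
  have h := nullW_mem hθ hp e
  rw [nullW] at h
  rw [altW]
  split_ifs with h1
  · exact ⟨mul_nonneg (by linarith) h.1, hlamp _ h1.1 _ h1.2⟩
  · exact h

set_option maxHeartbeats 800000 in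
/-- For the type II error no union bound is needed: the single set `D` already makes the test reject
unless its crossing count, its internal count or the total count deviates by `K` standard
deviations. -/
lemma typeII {n r : ℕ} {θ : Fin n → ℝ} {t T σ Λ : ℝ} (H : Good r θ t T σ Λ)
    {p : Fin n → Fin n → ℝ} (hθ : ∀ i, θ i ∈ Set.Ioo (0 : ℝ) 1)
    (hp : ∀ i j, p i j = θ i * θ j) {C D : Finset (Fin n)} (hC : C.card = r) (hDC : D ⊆ C)
    (hD : (r : ℝ) ^ ((1 : ℝ) / 3) ≤ D.card) {lam ε q K : ℝ} (hε : 0 < ε) (hlam : 1 ≤ lam)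
    (hlamp : ∀ i ∈ C, ∀ j ∈ C, lam * p i j ≤ 1) (hq : q ≤ 1 / 2800)
    (hqε : 9 * (28 * q) * (1 + ε) ≤ ε) (hK : 1 ≤ K) (hKσ : K * σ ≤ q)
    (hqΛ : K ^ 2 ≤ q ^ 2 * Λ)
    (hlog : ∀ l, Λ ≤ l → 8 + 11 * Real.log l ≤ 28 * q * l)
    (hlamE : 4 * K ^ 2 ≤ q ^ 2 * (lam * expCount n p D))
    (hcond : (1 + ε) * ((D.card : ℝ) * Real.log ((n : ℝ) / D.card)) ≤
      expCount n p D * hFun (lam - 1)) :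
    prob n (altW n p lam C) {a | scanTestU n r ε a = false} ≤ 3 * Real.exp (-(K ^ 2 / 4)) := by
  classical
  have hw := altW_mem hθ hp hlam hlamp
  have hk1 := H.one_lt_card hD
  have hDr : D.card ≤ r := hC ▸ Finset.card_le_card hDC
  have hσ := H.hσ
  have hσ1 := H.hσ1
  have hσq : σ ≤ q := (le_mul_of_one_le_left hσ.le hK).trans hKσ
  have hK2 : 1 ≤ K ^ 2 := one_le_pow₀ hK
  obtain ⟨hlam1, -, hlc, -, hw1, -⟩ := H.alt_facts hp hC hDC hD hε hlam hlamp hσq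
    (hK2.trans hqΛ) hcond
  have hS := H.S_pos
  have hd0 := H.d_pos (zero_lt_one.trans hk1)
  have hE0 := H.expCount_pos hp hD
  have hlE : 0 < lam * expCount n p D := mul_pos (by linarith) hE0
  have hcS := H.dS hC.le
  have hEV := H.expCount_le hp Finset.univ
  have hEC := H.expCount_le hp C
  have hc0 : 0 < ∑ i ∈ C, θ i := H.d_pos (by rw [hC]; exact zero_lt_one.trans H.hr)
  have hmv := sum_univ_alt p lam C
  have hmm := sum_cross_alt hp lam hDC
  have hσ2 : σ ^ 2 ≤ 1 / 100 := by nlinarith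
  set d := ∑ i ∈ D, θ i with hddef
  set S := ∑ i, θ i with hSdef
  set c := ∑ i ∈ C, θ i
  have hdS0 : 0 < d * S := mul_pos hd0 hS
  have hsS : √(S ^ 2) = S := Real.sqrt_sq hS.le
  have hs4 : √(4 * (d * S)) = 2 * √(d * S) := by
    rw [Real.sqrt_mul (by norm_num)]
    congr 1
    rw [show (4 : ℝ) = 2 ^ 2 by norm_num, Real.sqrt_sq (by norm_num)]
  have hlcS : lam * c ≤ S := hlc.trans (by nlinarith)
  have hcS' : c ≤ S := hcS.trans (by nlinarith)
  have hBv : ∑ e, altW n p lam C e ≤ S ^ 2 := by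
    rw [hmv]
    have h1 : (lam - 1) * expCount n p C ≤ lam * (c ^ 2 / 2) := by
      calc (lam - 1) * expCount n p C ≤ (lam - 1) * (c ^ 2 / 2) := by
            have : 0 ≤ lam - 1 := by linarith
            gcongr
        _ ≤ _ := by gcongr; linarith
    have h2 : lam * c * c ≤ S * S := by gcongr
    linarith
  have hBm : ∑ e ∈ crossE n D, altW n p lam C e ≤ 4 * (d * S) := by
    rw [hmm]
    have h1 : d * (lam * c) ≤ d * S := by gcongr
    have h2 : 0 ≤ d * c := by positivity
    have h3 : 0 ≤ lam * d ^ 2 := by positivity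
    linarith
  have hKB : K ≤ 2 * √(4 * (d * S)) := by
    rw [hs4]
    have hww : √(d * S) ^ 2 = d * S := Real.sq_sqrt hdS0.le
    have h1 : (1 : ℝ) ^ 2 ≤ (σ * √(d * S)) ^ 2 := by rw [mul_pow, hww]; linarith
    have h2 := (pow_le_pow_iff_left₀ zero_le_one (by positivity) two_ne_zero).1 h1
    have h3 : K * 1 ≤ K * (σ * √(d * S)) := by gcongr
    have h4 : K * σ * √(d * S) ≤ 1 * √(d * S) := by gcongr; linarith
    have := Real.sqrt_nonneg (d * S)
    linarith
  set A1 : Set (Config n) := {a | cnt Finset.univ a ≤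
    (∑ e, altW n p lam C e) - K * √(S ^ 2)} with hA1
  set A2 : Set (Config n) := {a | (∑ e ∈ crossE n D, altW n p lam C e) + K * √(4 * (d * S)) ≤
    cnt (crossE n D) a} with hA2
  set A3 : Set (Config n) := {a | cnt (inE n D) a ≤
    (∑ e ∈ inE n D, altW n p lam C e) - K * √(lam * expCount n p D)} with hA3
  have hsub : {a | scanTestU n r ε a = false} ⊆ A1 ∪ A2 ∪ A3 := by
    intro a ha
    by_contra hcon
    simp only [Set.mem_union, not_or] at hcon
    obtain ⟨⟨h1, h2⟩, h3⟩ := hcon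
    rw [hA1, Set.mem_ofPred_eq, not_le, hsS, ← inE_univ, ← eCount_eq_cnt] at h1
    rw [hA2, Set.mem_ofPred_eq, not_le, hs4, ← eCross_eq_cnt] at h2
    rw [hA3, Set.mem_ofPred_eq, not_le, sum_in_alt p lam hDC, ← eCount_eq_cnt] at h3
    rw [inE_univ] at h1
    have h4 := H.scanStatU_ge hp hC hDC hD hε hlam hlamp hq hqε hK hKσ hqΛ hlog hlamE hcond
      h1.le h2.le h3.le
    exact absurd h4 (not_le.2 (scanTestU_false ha hD hDr))
  have e1 : Real.exp (-(K ^ 2 / 2)) ≤ Real.exp (-(K ^ 2 / 4)) :=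
    Real.exp_le_exp.2 (by linarith)
  have p1 := prob_lower hw Finset.univ (by linarith : 0 ≤ K) (by positivity : 0 < S ^ 2) hBv
  have p2 := prob_upper hw (crossE n D) (by linarith : 0 ≤ K) (by positivity) hBm hKB
  have p3 := prob_lower hw (inE n D) (by linarith : 0 ≤ K) hlE (sum_in_alt p lam hDC).le
  have q0 := prob_mono hw hsub
  have q1 := prob_union hw (A1 ∪ A2) A3
  have q2 := prob_union hw A1 A2
  linarith

/-! ### Choice of constants and conclusion -/

lemma expCount_nonneg {n : ℕ} {p : Fin n → Fin n → ℝ} (hp : ∀ i j, 0 ≤ p i j)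
    (D : Finset (Fin n)) : 0 ≤ expCount n p D :=
  Finset.sum_nonneg fun e _ => by split_ifs <;> [exact hp _ _; exact le_rfl]

/-- The maximum defining the scan condition is attained at every maximizer of the objective, since
the factor `h (λ_C - 1)` does not depend on the subset. -/
lemma le_of_condSup {n : ℕ} {p : Fin n → Fin n → ℝ} {lam ε : ℝ} {C D : Finset (Fin n)}
    (hDC : D ⊆ C) (hD : D.Nonempty) (hlam : 1 ≤ lam)
    (hmax : ∀ D' : Finset (Fin n), D' ⊆ C → D'.Nonempty → objective n p D' ≤ objective n p D)
    (hL : 0 < (D.card : ℝ) * Real.log ((n : ℝ) / D.card))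
    (hcond : 1 + ε ≤ condSup n p lam C) :
    (1 + ε) * ((D.card : ℝ) * Real.log ((n : ℝ) / D.card)) ≤
      expCount n p D * hFun (lam - 1) := by
  have h0 : 0 ≤ hFun (lam - 1) := hFun_nonneg (by linarith)
  rw [← le_div_iff₀ hL]
  refine hcond.trans (csSup_le ⟨_, D, hDC, hD, rfl⟩ ?_)
  rintro x ⟨D', h1, h2, rfl⟩
  have := mul_le_mul_of_nonneg_right (hmax D' h1 h2) h0
  rw [objective, objective, div_mul_eq_mul_div, div_mul_eq_mul_div] at this
  exact this

lemma exists_maximizer {n : ℕ} (p : Fin n → Fin n → ℝ) {C : Finset (Fin n)} (hC : C.Nonempty) :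
    ∃ D : Finset (Fin n), D ⊆ C ∧ D.Nonempty ∧
      ∀ D' : Finset (Fin n), D' ⊆ C → D'.Nonempty → objective n p D' ≤ objective n p D := by
  classical
  obtain ⟨D, hD, hmax⟩ := (C.powerset.filter Finset.Nonempty).exists_max_image (objective n p)
    ⟨C, Finset.mem_filter.2 ⟨Finset.mem_powerset_self C, hC⟩⟩
  rw [Finset.mem_filter, Finset.mem_powerset] at hD
  exact ⟨D, hD.1, hD.2, fun D' h1 h2 =>
    hmax D' (Finset.mem_filter.2 ⟨Finset.mem_powerset.2 h1, h2⟩)⟩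

/-- The assumptions on the vertex weights hold with arbitrarily good constants for large `n`. -/
lemma eventually_good {r : ℕ → ℕ} {θ : ∀ n, Fin n → ℝ}
    (hθ : ∀ n, ∀ i : Fin n, θ n i ∈ Set.Ioo (0 : ℝ) 1)
    (hr : ∀ n, 2 ≤ n → 1 ≤ r n ∧ r n < n) (hA3 : Assumption3 θ r)
    (hro : (fun n => (r n : ℝ)) =o[atTop] fun n => (n : ℝ)) {σ Λ : ℝ} (hσ : 0 < σ)
    (hσ1 : σ ≤ 1 / 100) (hΛ1 : 1 ≤ Λ) :
    ∀ᶠ n in atTop, Good (r n) (θ n) (sInf (Set.range (θ n))) (sSup (Set.range (θ n))) σ Λ := by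
  filter_upwards [hA3.bound (by positivity : 0 < σ ^ 2), hro.bound (Real.exp_pos (-Λ)),
    eventually_ge_atTop 2] with n h3 hro hn2
  have hn : (0 : ℝ) < n := by exact_mod_cast (by omega : 0 < n)
  obtain ⟨hr1, hrn⟩ := hr n hn2
  have hr0 : (0 : ℝ) < r n := by exact_mod_cast hr1
  have hfin : (Set.range (θ n)).Finite := Set.finite_range _
  have hne : (Set.range (θ n)).Nonempty := ⟨_, ⟨0, by omega⟩, rfl⟩
  obtain ⟨i, hi⟩ := hne.csInf_mem hfin
  obtain ⟨j, hj⟩ := hne.csSup_mem hfin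
  have ht : 0 < sInf (Set.range (θ n)) := hi ▸ (hθ n i).1
  have hT : sSup (Set.range (θ n)) ≤ 1 := hj ▸ (hθ n j).2.le
  have hle : ∀ k, sInf (Set.range (θ n)) ≤ θ n k := fun k => csInf_le hfin.bddBelow ⟨k, rfl⟩
  have hge : ∀ k, θ n k ≤ sSup (Set.range (θ n)) := fun k => le_csSup hfin.bddAbove ⟨k, rfl⟩
  have htT : sInf (Set.range (θ n)) ≤ sSup (Set.range (θ n)) := (hle i).trans (hge i)
  set t := sInf (Set.range (θ n))
  set T := sSup (Set.range (θ n))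
  have hmin0 : 0 ≤ min ((r n : ℝ) ^ ((2 : ℝ) / 3)) ((n : ℝ) / (r n : ℝ) * t ^ 2) := by positivity
  rw [Real.norm_of_nonneg (sq_nonneg _), Real.norm_of_nonneg hmin0] at h3
  have hA : (T / t) ^ 2 ≤ σ ^ 2 * (r n : ℝ) ^ ((2 : ℝ) / 3) :=
    h3.trans (mul_le_mul_of_nonneg_left (min_le_left _ _) (sq_nonneg σ))
  have hB : (T / t) ^ 2 ≤ σ ^ 2 * ((n : ℝ) / (r n : ℝ) * t ^ 2) :=
    h3.trans (mul_le_mul_of_nonneg_left (min_le_right _ _) (sq_nonneg σ))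
  rw [Real.norm_of_nonneg hr0.le, Real.norm_of_nonneg hn.le] at hro
  refine ⟨ht, hle, hge, htT, hT, ?_, hrn, hσ, hσ1, ?_, ?_, ?_, hΛ1⟩
  · rcases hr1.lt_or_eq with h | h
    · exact h
    · rw [← h, Nat.cast_one, Real.one_rpow, mul_one] at hA
      have : 1 ≤ T / t := (one_le_div ht).2 htT
      have : 1 ≤ (T / t) ^ 2 := one_le_pow₀ this
      nlinarith
  · rw [div_pow, div_le_iff₀ (by positivity)] at hA
    linarith
  · rw [div_pow, div_le_iff₀ (by positivity)] at hB
    have := mul_le_mul_of_nonneg_left hB hr0.le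
    refine this.trans (le_of_eq ?_)
    field_simp
  · rw [Real.le_log_iff_exp_le (by positivity), le_div_iff₀ hr0]
    calc Real.exp Λ * r n ≤ Real.exp Λ * (Real.exp (-Λ) * n) := by gcongr
      _ = n := by rw [← mul_assoc, ← Real.exp_add, add_neg_cancel, Real.exp_zero, one_mul]

lemma eventually_log {q : ℝ} (hq : 0 < q) :
    ∀ᶠ Λ : ℝ in atTop, ∀ l, Λ ≤ l → 8 + 11 * Real.log l ≤ 28 * q * l := by
  rw [eventually_forall_ge_atTop]
  have h1 := Real.isLittleO_log_id_atTop.bound hq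
  filter_upwards [h1, eventually_ge_atTop (8 / q), eventually_ge_atTop 0] with l h1 h2 h3
  rw [id, Real.norm_of_nonneg h3] at h1
  have h4 := (le_abs_self _).trans h1
  rw [div_le_iff₀ hq] at h2
  have : 0 ≤ q * l := by positivity
  linarith

/-- **Theorem 3** (scan test with unknown rank-1 edge probabilities is powerful). Suppose
the edge probabilities are rank-1, `p_{ij} = θ_i θ_j` with `θ_i ∈ (0,1)`, and Assumption 3
holds. If `r(n) = o(n)`, the quantity `λ_C · E₀[e(D*_C)]` (over all communities `C` of
size `r n` and all maximizers `D*_C` of `D ↦ E₀[e(D)]/(|D| log(n/|D|))`) tends uniformly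
to `∞`, and eventually every community `C` of size `r n` satisfies the scan condition
`max_{∅ ≠ D ⊆ C} E₀[e(D)] h(λ_C - 1)/(|D| log(n/|D|)) ≥ 1 + ε`, then the
unknown-probability scan test with parameter `ε` is asymptotically powerful. -/
theorem unknown_scan_test_powerful
    (p : ∀ n, Fin n → Fin n → ℝ) (r : ℕ → ℕ) (lam : ∀ n, Finset (Fin n) → ℝ)
    (θ : ∀ n, Fin n → ℝ)
    (hθ : ∀ n, ∀ i : Fin n, θ n i ∈ Set.Ioo (0 : ℝ) 1)
    (hpθ : ∀ n, ∀ i j : Fin n, p n i j = θ n i * θ n j)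
    (hr : ∀ n, 2 ≤ n → 1 ≤ r n ∧ r n < n)
    (hlam : ∀ n, ∀ C : Finset (Fin n), C.card = r n → 1 ≤ lam n C)
    (hlamp : ∀ n, ∀ C : Finset (Fin n), C.card = r n →
      ∀ i ∈ C, ∀ j ∈ C, lam n C * p n i j ≤ 1)
    (hA3 : Assumption3 θ r)
    (hro : (fun n => (r n : ℝ)) =o[atTop] fun n => (n : ℝ))
    (hinfty : Tendsto (fun n => sInf {x | ∃ C : Finset (Fin n), C.card = r n ∧
      ∃ D : Finset (Fin n), D ⊆ C ∧ D.Nonempty ∧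
        (∀ D' : Finset (Fin n), D' ⊆ C → D'.Nonempty →
          objective n (p n) D' ≤ objective n (p n) D) ∧
        x = lam n C * expCount n (p n) D}) atTop atTop)
    (ε : ℝ) (hε : 0 < ε)
    (hcond : ∀ᶠ n in atTop, ∀ C : Finset (Fin n), C.card = r n →
      1 + ε ≤ condSup n (p n) (lam n C) C) :
    Tendsto (fun n => risk n (r n) (p n) (lam n) (scanTestU n (r n) ε)) atTop (nhds 0) := by
  have hnull : ∀ n, ∀ e, 0 ≤ nullW n (p n) e ∧ nullW n (p n) e ≤ 1 :=
    fun n => nullW_mem (hθ n) (hpθ n)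
  have halt : ∀ n, ∀ C : Finset (Fin n), C.card = r n → ∀ e,
      0 ≤ altW n (p n) (lam n C) C e ∧ altW n (p n) (lam n C) C e ≤ 1 :=
    fun n C hC => altW_mem (hθ n) (hpθ n) (hlam n C hC) (hlamp n C hC)
  have hp0 : ∀ n, ∀ i j, 0 ≤ p n i j := fun n i j => by
    rw [hpθ]; exact mul_nonneg (hθ n i).1.le (hθ n j).1.le
  have hrisk0 : ∀ n, 0 ≤ risk n (r n) (p n) (lam n) (scanTestU n (r n) ε) := by
    intro n
    refine add_nonneg (prob_nonneg (hnull n) _) (Real.sSup_nonneg ?_)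
    rintro x ⟨C, hC, rfl⟩
    exact prob_nonneg (halt n C hC) _
  rw [Metric.tendsto_atTop']
  suffices hmain : ∀ η : ℝ, 0 < η →
      ∀ᶠ n in atTop, risk n (r n) (p n) (lam n) (scanTestU n (r n) ε) < η by
    intro η hη
    obtain ⟨N, hN⟩ := eventually_atTop.1 (hmain η hη)
    refine ⟨N, fun n hn => ?_⟩
    rw [Real.dist_eq, sub_zero, abs_of_nonneg (hrisk0 n)]
    exact hN n hn.le
  intro η hη
  set e1 := min ε 1 with he1def
  have he0 : 0 < e1 := lt_min hε one_pos
  have he1 : e1 ≤ 1 := min_le_right _ _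
  have hεe : e1 ≤ ε := min_le_left _ _
  -- `K` standard deviations bound every single count up to probability `η / 20`
  set K := max 1 (4 * Real.log (20 / η)) with hKdef
  have hK : 1 ≤ K := le_max_left _ _
  have hKexp : Real.exp (-(K ^ 2 / 4)) ≤ η / 20 := by
    have h1 : 4 * Real.log (20 / η) ≤ K := le_max_right _ _
    have h2 : K ≤ K ^ 2 := by nlinarith
    have h3 : Real.log (20 / η) = -Real.log (η / 20) := by
      rw [← Real.log_inv, inv_div]
    calc Real.exp (-(K ^ 2 / 4)) ≤ Real.exp (Real.log (η / 20)) :=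
          Real.exp_le_exp.2 (by linarith)
      _ = η / 20 := Real.exp_log (by positivity)
  obtain ⟨q, hq0, hq, hqε⟩ : ∃ q : ℝ, 0 < q ∧ q ≤ 1 / 2800 ∧ 9 * (28 * q) * (1 + ε) ≤ ε := by
    refine ⟨min (1 / 2800) (ε / (252 * (1 + ε))), by positivity, min_le_left _ _, ?_⟩
    have h1 := min_le_right (1 / 2800 : ℝ) (ε / (252 * (1 + ε)))
    rw [le_div_iff₀ (by positivity)] at h1
    linarith
  obtain ⟨σ, hσ, hσ1, hKσ, hKσq⟩ : ∃ σ : ℝ, 0 < σ ∧ σ ≤ 1 / 100 ∧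
      K * σ ≤ (e1 / 64) ^ 2 / 200 ∧ K * σ ≤ q := by
    have hK0 : 0 < K := by linarith
    refine ⟨min (1 / 100) (min ((e1 / 64) ^ 2 / 200) q / K), by positivity, min_le_left _ _, ?_⟩
    have h1 := min_le_right (1 / 100) (min ((e1 / 64) ^ 2 / 200) q / K)
    rw [le_div_iff₀ hK0] at h1
    exact ⟨by linarith [min_le_left ((e1 / 64) ^ 2 / 200) q],
      by linarith [min_le_right ((e1 / 64) ^ 2 / 200) q]⟩
  obtain ⟨Λ, hlog, hΛ1, hΛ2, hqΛ, hΛ3⟩ := ((eventually_log hq0).and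
    ((eventually_ge_atTop 1).and ((eventually_ge_atTop (12 / e1)).and
    ((eventually_ge_atTop (K ^ 2 / q ^ 2)).and
    (eventually_ge_atTop (6 / e1 * (1 + Real.log (20 / η)))))))).exists
  have hΛ2' : 2 ≤ e1 / 6 * Λ := by
    rw [div_le_iff₀ he0] at hΛ2; linarith
  have hqΛ' : K ^ 2 ≤ q ^ 2 * Λ := by
    rw [div_le_iff₀ (by positivity)] at hqΛ; linarith
  have hΛexp : Real.exp (-(e1 / 6 * Λ - 1)) ≤ η / 20 := by
    have h3 : Real.log (20 / η) = -Real.log (η / 20) := by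
      rw [← Real.log_inv, inv_div]
    have h4 : 1 + Real.log (20 / η) ≤ e1 / 6 * Λ := by
      have := mul_le_mul_of_nonneg_left hΛ3 (by positivity : 0 ≤ e1 / 6)
      have h5 : e1 / 6 * (6 / e1 * (1 + Real.log (20 / η))) = 1 + Real.log (20 / η) := by
        field_simp
      linarith
    calc Real.exp (-(e1 / 6 * Λ - 1)) ≤ Real.exp (Real.log (η / 20)) :=
          Real.exp_le_exp.2 (by linarith)
      _ = η / 20 := Real.exp_log (by positivity)
  filter_upwards [eventually_good hθ hr hA3 hro hσ hσ1 hΛ1, hcond,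
    hinfty.eventually_ge_atTop (4 * K ^ 2 / q ^ 2)] with n H hc hinf
  have hI := typeI H (hθ n) (hpθ n) he0 he1 hεe hK hKσ hΛ2'
  have hII : sSup {x | ∃ C : Finset (Fin n), C.card = r n ∧
      x = prob n (altW n (p n) (lam n C) C) {a | scanTestU n (r n) ε a = false}} ≤
      3 * Real.exp (-(K ^ 2 / 4)) := by
    refine Real.sSup_le ?_ (by positivity)
    rintro x ⟨C, hC, rfl⟩
    have hCne : C.Nonempty := Finset.card_pos.1 (by rw [hC]; exact zero_lt_one.trans H.hr)
    obtain ⟨D, hDC, hDne, hmax⟩ := exists_maximizer (p n) hCne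
    have hD := H.card_ge (hpθ n) hC hDC hDne (hmax C subset_rfl hCne)
    have hk1 := H.one_lt_card hD
    have hl := H.log_ge hk1.le (hC ▸ Finset.card_le_card hDC)
    have hL : 0 < (D.card : ℝ) * Real.log ((n : ℝ) / D.card) :=
      mul_pos (by exact_mod_cast zero_lt_one.trans hk1) (by linarith)
    refine typeII H (hθ n) (hpθ n) hC hDC hD hε (hlam n C hC) (hlamp n C hC) hq hqε hK hKσq hqΛ'
      hlog ?_ (le_of_condSup hDC hDne (hlam n C hC) hmax hL (hc C hC))
    have h1 : 4 * K ^ 2 / q ^ 2 ≤ lam n C * expCount n (p n) D := by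
      refine hinf.trans (csInf_le ⟨0, ?_⟩ ⟨C, hC, D, hDC, hDne, hmax, rfl⟩)
      rintro x ⟨C', hC', D', -, -, -, rfl⟩
      exact mul_nonneg (zero_le_one.trans (hlam n C' hC')) (expCount_nonneg (hp0 n) D')
    rw [div_le_iff₀ (by positivity)] at h1
    linarith
  rw [risk]
  linarith

end CommunityDetection
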